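/- arXiv:1507.04471 — 4 statements merged into one kernel-verified Lean document; each statement's English description precedes it below -/
import Mathlib

section
/- For every d ≥ 1 and every n ≥ d+1, there exists a d-hypertree T on [n] over F_2 with average filling-volume μ(T) ≥ c_d·C(n-1,d), where c_d = 16·48^{−3^{d−1}}. -/
open Finset symmDiff

/-- The vertex set `[n] = {1, …, n}`. -/
def rng (n : ℕ) : Finset ℕ := Finset.Icc 1 n

/-- The set of `d`-simplices (i.e. `(d+1)`-element subsets) on the vertex set `V`. -/
def simplices (V : Finset ℕ) (d : ℕ) : Finset (Finset ℕ) :=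
  V.powerset.filter fun σ => σ.card = d + 1

/-- The mod-2 boundary of a set `X` of simplices: the set of faces `τ` of codimension one
(`|τ| + 1 = |σ|`) contained in an odd number of members of `X`. -/
def bd (X : Finset (Finset ℕ)) : Finset (Finset ℕ) :=
  (X.biUnion fun σ => σ.powerset).filter
    fun τ => Odd (X.filter fun σ => τ ⊆ σ ∧ τ.card + 1 = σ.card).card

/-- A set of simplices is acyclic (a forest) over `F_2` if no nonempty subset has
empty boundary. -/
def IsAcyclic (F : Finset (Finset ℕ)) : Prop :=
  ∀ Y ⊆ F, Y ≠ ∅ → bd Y ≠ ∅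

/-- A `d`-hypertree on `V`: a maximal acyclic set of `d`-simplices on `V`. -/
def IsHypertreeOn (V : Finset ℕ) (d : ℕ) (T : Finset (Finset ℕ)) : Prop :=
  T ⊆ simplices V d ∧ IsAcyclic T ∧
    ∀ G, T ⊆ G → G ⊆ simplices V d → IsAcyclic G → G = T

/-- A simple cycle over `F_2`: a nonempty set with empty boundary, no nonempty proper
subset of which has empty boundary. -/
def IsSimpleCycle (Z : Finset (Finset ℕ)) : Prop :=
  Z ≠ ∅ ∧ bd Z = ∅ ∧ ∀ Y ⊂ Z, Y ≠ ∅ → bd Y ≠ ∅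

/-- Collapsibility: `X` can be reduced to `∅` by repeatedly removing a simplex `σ ∈ X`
containing a codimension-one face contained in no other current member of `X`. -/
inductive Collapsible : Finset (Finset ℕ) → Prop
  | empty : Collapsible ∅
  | step (X : Finset (Finset ℕ)) (σ τ : Finset ℕ) (hσ : σ ∈ X) (hτ : τ ⊆ σ)
      (hcard : τ.card + 1 = σ.card) (huniq : ∀ σ' ∈ X, τ ⊆ σ' → σ' = σ)
      (h : Collapsible (X.erase σ)) : Collapsible X

/-- The cone over `X` with apex `v`. -/
def cone (v : ℕ) (X : Finset (Finset ℕ)) : Finset (Finset ℕ) :=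
  X.image (insert v)

/-- The link of the vertex `v` in `X`. -/
def link (v : ℕ) (X : Finset (Finset ℕ)) : Finset (Finset ℕ) :=
  (X.filter fun σ => v ∈ σ).image fun σ => σ.erase v

/-- `fill Z T`: the subset `F ⊆ T` with `∂F = Z` (when it exists; it is unique when `T`
is a hypertree and `Z` a cycle). -/
noncomputable def fill (Z T : Finset (Finset ℕ)) : Finset (Finset ℕ) :=
  if h : ∃ F, F ⊆ T ∧ bd F = Z then h.choose else ∅

/-- The average filling-volume `μ(T)` of a `d`-hypertree `T` on `[n]`. -/
noncomputable def fillVolAvg (n d : ℕ) (T : Finset (Finset ℕ)) : ℝ :=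
  (∑ σ ∈ simplices (rng n) d, ((fill (bd {σ}) T).card : ℝ)) / (n.choose (d + 1) : ℝ)

open Classical in
/-- The cut of `τ` in `T`: the set of `d`-simplices `σ` on `[n]` such that
`T ⊕ {τ} ⊕ {σ}` is a `d`-hypertree on `[n]`. -/
noncomputable def cut (n d : ℕ) (τ : Finset ℕ) (T : Finset (Finset ℕ)) : Finset (Finset ℕ) :=
  (simplices (rng n) d).filter fun σ => IsHypertreeOn (rng n) d ((T ∆ {τ}) ∆ {σ})


abbrev Ch := Finset (Finset ℕ)

def supp (R : Ch) : Finset ℕ := R.biUnion id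

def del (v : ℕ) (Z : Ch) : Ch := Z.filter fun σ => v ∉ σ

lemma mem_supp {R : Ch} {u : ℕ} : u ∈ supp R ↔ ∃ σ ∈ R, u ∈ σ := by
  simp [supp]

lemma supp_mono {A B : Ch} (h : A ⊆ B) : supp A ⊆ supp B := by
  intro u hu
  rw [mem_supp] at hu ⊢
  obtain ⟨σ, h1, h2⟩ := hu
  exact ⟨σ, h h1, h2⟩

lemma mem_bd {X : Ch} {τ : Finset ℕ} :
    τ ∈ bd X ↔ Odd (X.filter fun σ => τ ⊆ σ ∧ τ.card + 1 = σ.card).card := by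
  unfold bd
  rw [mem_filter]
  refine ⟨fun h => h.2, fun h => ⟨?_, h⟩⟩
  obtain ⟨σ, hσ⟩ := Finset.card_pos.1 h.pos
  rw [mem_filter] at hσ
  rw [mem_biUnion]
  exact ⟨σ, hσ.1, mem_powerset.2 hσ.2.1⟩

lemma odd_card_symmDiff (A B : Ch) : Odd (A ∆ B).card ↔ ¬ (Odd A.card ↔ Odd B.card) := by
  have h1 : (A ∆ B).card = (A \ B).card + (B \ A).card := by
    rw [symmDiff_def, sup_eq_union, card_union_of_disjoint]
    exact disjoint_sdiff_sdiff
  have h2 := card_sdiff_add_card_inter A B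
  have h3 := card_sdiff_add_card_inter B A
  rw [inter_comm] at h3
  rw [h1]
  simp only [Nat.odd_iff]
  omega

lemma bd_symmDiff (X Y : Ch) : bd (X ∆ Y) = bd X ∆ bd Y := by
  ext τ
  rw [mem_symmDiff, mem_bd, mem_bd, mem_bd]
  have : (X ∆ Y).filter (fun σ => τ ⊆ σ ∧ τ.card + 1 = σ.card)
      = (X.filter (fun σ => τ ⊆ σ ∧ τ.card + 1 = σ.card)) ∆
        (Y.filter (fun σ => τ ⊆ σ ∧ τ.card + 1 = σ.card)) := by
    ext σ
    simp only [mem_symmDiff, mem_filter]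
    tauto
  rw [this, odd_card_symmDiff]
  tauto

lemma bd_empty : bd ∅ = ∅ := by simp [bd]

lemma bd_single (σ : Finset ℕ) (τ : Finset ℕ) :
    τ ∈ bd {σ} ↔ τ ⊆ σ ∧ τ.card + 1 = σ.card := by
  rw [mem_bd, filter_singleton]
  split_ifs with h <;> simp [h]

lemma bd_bd_single (σ : Finset ℕ) : bd (bd {σ}) = ∅ := by
  ext ρ
  simp only [notMem_empty, iff_false]
  rw [mem_bd]
  by_cases h : ρ ⊆ σ ∧ ρ.card + 2 = σ.card
  · have : (bd {σ}).filter (fun τ => ρ ⊆ τ ∧ ρ.card + 1 = τ.card)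
        = (σ \ ρ).image (fun a => insert a ρ) := by
      ext τ
      simp only [mem_filter, bd_single, mem_image, mem_sdiff]
      constructor
      · rintro ⟨⟨h1, h2⟩, h3, h4⟩
        have h5 : (τ \ ρ).card = 1 := by
          rw [card_sdiff_of_subset h3]; omega
        obtain ⟨a, ha⟩ := card_eq_one.1 h5
        have ha' : a ∈ τ \ ρ := by rw [ha]; simp
        rw [mem_sdiff] at ha'
        refine ⟨a, ⟨h1 ha'.1, ha'.2⟩, ?_⟩
        rw [insert_eq, ← ha, sdiff_union_of_subset h3]
      · rintro ⟨a, ⟨h1, h2⟩, rfl⟩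
        refine ⟨⟨insert_subset h1 h.1, ?_⟩, subset_insert _ _, ?_⟩
        · rw [card_insert_of_notMem h2]; omega
        · rw [card_insert_of_notMem h2]
    rw [this, card_image_of_injOn, card_sdiff_of_subset h.1]
    · have : σ.card - ρ.card = 2 := by omega
      rw [this]; decide
    · intro a ha b hb hab
      simp only [coe_sdiff, Set.mem_diff, mem_coe] at ha hb
      have hab' : insert a ρ = insert b ρ := hab
      have : a ∈ insert b ρ := by rw [← hab']; simp
      rw [mem_insert] at this
      tauto
  · have : (bd {σ}).filter (fun τ => ρ ⊆ τ ∧ ρ.card + 1 = τ.card) = ∅ := by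
      apply filter_eq_empty_iff.2
      rintro τ hτ ⟨h1, h2⟩
      rw [bd_single] at hτ
      exact h ⟨h1.trans hτ.1, by omega⟩
    rw [this]; simp

/-- no simplex of `X` contains `v` -/
def NoV (v : ℕ) (X : Ch) : Prop := ∀ σ ∈ X, v ∉ σ

lemma NoV.symmDiff {v : ℕ} {X Y : Ch} (hX : NoV v X) (hY : NoV v Y) : NoV v (X ∆ Y) := by
  intro σ hσ
  rw [mem_symmDiff] at hσ
  rcases hσ with h | h
  · exact hX _ h.1
  · exact hY _ h.1

lemma NoV.bd {v : ℕ} {X : Ch} (hX : NoV v X) : NoV v (bd X) := by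
  intro τ hτ hv
  rw [mem_bd] at hτ
  obtain ⟨σ, hσ⟩ := Finset.card_pos.1 hτ.pos
  rw [mem_filter] at hσ
  exact hX σ hσ.1 (hσ.2.1 hv)

lemma NoV.mono {v : ℕ} {X Y : Ch} (hX : NoV v X) (h : Y ⊆ X) : NoV v Y :=
  fun σ hσ => hX σ (h hσ)

lemma noV_of_sub {v k : ℕ} {V : Finset ℕ} {X : Ch} (h : X ⊆ (V.erase v).powersetCard k) :
    NoV v X := by
  intro σ hσ hv
  have := (mem_powersetCard.1 (h hσ)).1 hv
  simp at this

lemma mem_cone {v : ℕ} {X : Ch} (hX : NoV v X) {σ : Finset ℕ} :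
    σ ∈ cone v X ↔ v ∈ σ ∧ σ.erase v ∈ X := by
  unfold cone
  rw [mem_image]
  constructor
  · rintro ⟨τ, h, rfl⟩
    refine ⟨mem_insert_self _ _, ?_⟩
    rwa [erase_insert (hX τ h)]
  · rintro ⟨h1, h2⟩
    exact ⟨_, h2, insert_erase h1⟩

lemma card_cone {v : ℕ} {X : Ch} (hX : NoV v X) : (cone v X).card = X.card := by
  unfold cone
  apply card_image_of_injOn
  intro a ha b hb hab
  have hab' : insert v a = insert v b := hab
  rw [← erase_insert (hX a ha), ← erase_insert (hX b hb), hab']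

lemma bd_cone {v : ℕ} {X : Ch} (hX : NoV v X) : bd (cone v X) = X ∆ cone v (bd X) := by
  ext τ
  rw [mem_symmDiff, mem_cone hX.bd, mem_bd]
  by_cases hv : v ∈ τ
  · have h1 : τ ∉ X := fun h => hX τ h hv
    have h2 : (cone v X).filter (fun σ => τ ⊆ σ ∧ τ.card + 1 = σ.card)
        = cone v (X.filter (fun σ => τ.erase v ⊆ σ ∧ (τ.erase v).card + 1 = σ.card)) := by
      ext σ
      rw [mem_filter, mem_cone hX, mem_cone (hX.mono (filter_subset _ _)), mem_filter]
      constructor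
      · rintro ⟨⟨a, b⟩, c, d⟩
        refine ⟨a, b, erase_subset_erase _ c, ?_⟩
        rw [card_erase_of_mem hv, card_erase_of_mem a, ← d]
        have := card_pos.2 ⟨v, hv⟩
        omega
      · rintro ⟨a, b, c, d⟩
        refine ⟨⟨a, b⟩, ?_, ?_⟩
        · intro x hx
          by_cases hxv : x = v
          · exact hxv ▸ a
          · exact mem_of_mem_erase (c (mem_erase.2 ⟨hxv, hx⟩))
        · rw [card_erase_of_mem hv, card_erase_of_mem a] at d
          have := card_pos.2 ⟨v, hv⟩
          have := card_pos.2 ⟨v, a⟩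
          omega
    rw [h2, card_cone (hX.mono (filter_subset _ _)), ← mem_bd]
    tauto
  · have h2 : (cone v X).filter (fun σ => τ ⊆ σ ∧ τ.card + 1 = σ.card)
        = if τ ∈ X then {insert v τ} else ∅ := by
      ext σ
      rw [mem_filter, mem_cone hX]
      constructor
      · rintro ⟨⟨a, b⟩, c, d⟩
        have : τ = σ.erase v := by
          apply eq_of_subset_of_card_le
          · intro x hx
            exact mem_erase.2 ⟨fun h => hv (h ▸ hx), c hx⟩
          · rw [card_erase_of_mem a]; omega
        rw [← this] at b
        rw [if_pos b, mem_singleton, this, insert_erase a]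
      · intro h
        split_ifs at h with h'
        · rw [mem_singleton] at h
          subst h
          refine ⟨⟨mem_insert_self _ _, ?_⟩, subset_insert _ _, ?_⟩
          · rwa [erase_insert hv]
          · rw [card_insert_of_notMem hv]
        · simp at h
    rw [h2]
    split_ifs with h' <;> simp [h', hv]

lemma noV_link (v : ℕ) (Z : Ch) : NoV v (link v Z) := by
  intro σ hσ
  unfold link at hσ
  rw [mem_image] at hσ
  obtain ⟨τ, _, rfl⟩ := hσ
  simp

lemma noV_del (v : ℕ) (Z : Ch) : NoV v (del v Z) := by
  intro σ hσ
  exact (mem_filter.1 hσ).2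

lemma mem_link {v : ℕ} {Z : Ch} {σ : Finset ℕ} :
    σ ∈ link v Z ↔ v ∉ σ ∧ insert v σ ∈ Z := by
  unfold link
  simp only [mem_image, mem_filter]
  constructor
  · rintro ⟨τ, ⟨h1, h2⟩, rfl⟩
    exact ⟨by simp, by rwa [insert_erase h2]⟩
  · rintro ⟨h1, h2⟩
    exact ⟨_, ⟨h2, mem_insert_self _ _⟩, erase_insert h1⟩

lemma decomp (v : ℕ) (Z : Ch) : Z = del v Z ∆ cone v (link v Z) := by
  ext σ
  rw [mem_symmDiff, mem_cone (noV_link v Z), mem_link, del, mem_filter]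
  by_cases h : v ∈ σ
  · simp [h, insert_erase h]
  · simp [h]

lemma symmDiff_cone_eq_empty {v : ℕ} {A B : Ch} (hA : NoV v A) (hB : NoV v B)
    (h : A ∆ cone v B = ∅) : A = ∅ ∧ B = ∅ := by
  have h' : A = cone v B := symmDiff_eq_bot.1 h
  have hA0 : A = ∅ := by
    by_contra hne
    obtain ⟨σ, hσ⟩ := nonempty_iff_ne_empty.2 hne
    have h1 := hA σ hσ
    rw [h', mem_cone hB] at hσ
    exact h1 hσ.1
  refine ⟨hA0, ?_⟩
  rw [hA0] at h'
  rw [← card_eq_zero, ← card_cone hB, ← h', card_empty]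

lemma cone_symmDiff {v : ℕ} {A B : Ch} (hA : NoV v A) (hB : NoV v B) :
    cone v (A ∆ B) = cone v A ∆ cone v B := by
  ext σ
  rw [mem_symmDiff, mem_cone (hA.symmDiff hB), mem_cone hA, mem_cone hB, mem_symmDiff]
  tauto

lemma cyc_split {v : ℕ} {Z : Ch} (h : bd Z = ∅) :
    bd (del v Z) = link v Z ∧ bd (link v Z) = ∅ := by
  have hl := noV_link v Z
  have hd := noV_del v Z
  rw [decomp v Z, bd_symmDiff, bd_cone hl, ← symmDiff_assoc] at h
  obtain ⟨h1, h2⟩ := symmDiff_cone_eq_empty (hd.bd.symmDiff hl) hl.bd h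
  exact ⟨symmDiff_eq_bot.1 h1, h2⟩

lemma disj_cone {v : ℕ} {A B : Ch} (hA : NoV v A) (hB : NoV v B) : Disjoint (cone v A) B := by
  rw [disjoint_left]
  intro σ h1 h2
  rw [mem_cone hA] at h1
  exact hB σ h2 h1.1

lemma cone_union_eq {v : ℕ} {A B : Ch} (hA : NoV v A) (hB : NoV v B) :
    cone v A ∪ B = cone v A ∆ B := ((disj_cone hA hB).symmDiff_eq_sup).symm

lemma bd_cone_union {v : ℕ} {A B : Ch} (hA : NoV v A) (hB : NoV v B) :
    bd (cone v A ∪ B) = (A ∆ bd B) ∆ cone v (bd A) := by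
  rw [cone_union_eq hA hB, bd_symmDiff, bd_cone hA, symmDiff_assoc, symmDiff_assoc,
    symmDiff_comm (cone v (bd A))]

/-- Every subset of a cone union splits. -/
lemma sub_split {v : ℕ} {F T' Y : Ch} (hF : NoV v F) (hY : Y ⊆ cone v F ∪ T') (hT : NoV v T') :
    ∃ A B, A ⊆ F ∧ B ⊆ T' ∧ Y = cone v A ∪ B := by
  refine ⟨F.filter (fun σ => insert v σ ∈ Y), T' ∩ Y, filter_subset _ _, inter_subset_left, ?_⟩
  ext σ
  rw [mem_union, mem_cone (hF.mono (filter_subset _ _)), mem_inter, mem_filter]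
  constructor
  · intro h
    have := hY h
    rw [mem_union, mem_cone hF] at this
    rcases this with h1 | h1
    · left
      refine ⟨h1.1, h1.2, ?_⟩
      rwa [insert_erase h1.1]
    · right; exact ⟨h1, h⟩
  · rintro (h | h)
    · rw [insert_erase h.1] at h; exact h.2.2
    · exact h.2

lemma fill_eq {T F Z : Ch} (hT : IsAcyclic T) (hF : F ⊆ T) (h : bd F = Z) : fill Z T = F := by
  have hex : ∃ F, F ⊆ T ∧ bd F = Z := ⟨F, hF, h⟩
  unfold fill
  rw [dif_pos hex]
  obtain ⟨h1, h2⟩ := hex.choose_spec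
  by_contra hne
  refine hT (hex.choose ∆ F) ?_ ?_ ?_
  · intro σ hσ
    rw [mem_symmDiff] at hσ
    rcases hσ with h' | h'
    · exact h1 h'.1
    · exact hF h'.1
  · intro h'; exact hne (symmDiff_eq_bot.1 h')
  · rw [bd_symmDiff, h2, h]; exact symmDiff_self _

structure Good (k : ℕ) (V : Finset ℕ) (T : Ch) : Prop where
  sub : T ⊆ V.powersetCard (k + 1)
  acyc : IsAcyclic T
  fills : ∀ Z ⊆ V.powersetCard k, bd Z = ∅ → ∃ F ⊆ T, bd F = Z
  card : T.card ≤ (V.card - 1).choose k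
  supp : ∀ R ⊆ T, R.card ≤ (supp R).card * (V.card - 2).choose (k - 1)

lemma Good.fill_spec {k : ℕ} {V : Finset ℕ} {T Z : Ch} (h : Good k V T)
    (hZ : Z ⊆ V.powersetCard k) (hb : bd Z = ∅) : fill Z T ⊆ T ∧ bd (fill Z T) = Z := by
  obtain ⟨F, h1, h2⟩ := h.fills Z hZ hb
  rw [fill_eq h.acyc h1 h2]
  exact ⟨h1, h2⟩

lemma Good.noV {k v : ℕ} {V : Finset ℕ} {T : Ch} (h : Good k (V.erase v) T) : NoV v T :=
  noV_of_sub h.sub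

lemma link_sub {k v : ℕ} {V : Finset ℕ} {Z : Ch} (hZ : Z ⊆ V.powersetCard (k + 1)) :
    link v Z ⊆ (V.erase v).powersetCard k := by
  intro σ hσ
  rw [mem_link] at hσ
  have := mem_powersetCard.1 (hZ hσ.2)
  rw [card_insert_of_notMem hσ.1] at this
  rw [mem_powersetCard]
  refine ⟨?_, by omega⟩
  intro x hx
  exact mem_erase.2 ⟨fun h => hσ.1 (h ▸ hx), this.1 (mem_insert_of_mem hx)⟩

lemma del_sub {k v : ℕ} {V : Finset ℕ} {Z : Ch} (hZ : Z ⊆ V.powersetCard k) :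
    del v Z ⊆ (V.erase v).powersetCard k := by
  intro σ hσ
  rw [del, mem_filter] at hσ
  have := mem_powersetCard.1 (hZ hσ.1)
  rw [mem_powersetCard]
  refine ⟨?_, this.2⟩
  intro x hx
  exact mem_erase.2 ⟨fun h => hσ.2 (h ▸ hx), this.1 hx⟩

lemma symmDiff_sub {A B C : Ch} (hA : A ⊆ C) (hB : B ⊆ C) : A ∆ B ⊆ C := by
  intro σ hσ
  rw [mem_symmDiff] at hσ
  rcases hσ with h' | h'
  · exact hA h'.1
  · exact hB h'.1

/-- The next cycle. -/
noncomputable def nxt (v : ℕ) (Z F : Ch) : Ch := del v Z ∆ fill (link v Z) F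

lemma nxt_sub {k v : ℕ} {V : Finset ℕ} {F Z : Ch} (hF : Good k (V.erase v) F)
    (hZ : Z ⊆ V.powersetCard (k + 1)) (hb : bd Z = ∅) :
    nxt v Z F ⊆ (V.erase v).powersetCard (k + 1) :=
  symmDiff_sub (del_sub hZ) ((hF.fill_spec (link_sub hZ) (cyc_split hb).2).1.trans hF.sub)

lemma nxt_bd {k v : ℕ} {V : Finset ℕ} {F Z : Ch} (hF : Good k (V.erase v) F)
    (hZ : Z ⊆ V.powersetCard (k + 1)) (hb : bd Z = ∅) : bd (nxt v Z F) = ∅ := by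
  rw [nxt, bd_symmDiff, (cyc_split hb).1, (hF.fill_spec (link_sub hZ) (cyc_split hb).2).2]
  exact symmDiff_self _

lemma fill_step_aux {k v : ℕ} {V : Finset ℕ} {F T' Z : Ch} (hF : Good k (V.erase v) F)
    (hT : Good (k + 1) (V.erase v) T')
    (hZ : Z ⊆ V.powersetCard (k + 1)) (hb : bd Z = ∅) :
    cone v (fill (link v Z) F) ∪ fill (nxt v Z F) T' ⊆ cone v F ∪ T' ∧
    bd (cone v (fill (link v Z) F) ∪ fill (nxt v Z F) T') = Z := by
  obtain ⟨h1, h2⟩ := hF.fill_spec (link_sub (v := v) hZ) (cyc_split hb).2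
  obtain ⟨h3, h4⟩ := hT.fill_spec (nxt_sub hF hZ hb) (nxt_bd hF hZ hb)
  refine ⟨union_subset_union (image_subset_image h1) h3, ?_⟩
  rw [bd_cone_union (hF.noV.mono h1) (hT.noV.mono h3), h2, h4, nxt]
  conv_rhs => rw [decomp v Z]
  congr 1
  rw [symmDiff_comm (del v Z), ← symmDiff_assoc, symmDiff_self, bot_symmDiff]

lemma acyc_step {k v : ℕ} {V : Finset ℕ} {F T' : Ch} (hF : Good k (V.erase v) F)
    (hT : Good (k + 1) (V.erase v) T') : IsAcyclic (cone v F ∪ T') := by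
  intro Y hY hne hb
  obtain ⟨A, B, hA, hB, rfl⟩ := sub_split hF.noV hY hT.noV
  have hA' := hF.noV.mono hA
  have hB' := hT.noV.mono hB
  rw [bd_cone_union hA' hB'] at hb
  obtain ⟨h1, h2⟩ := symmDiff_cone_eq_empty (hA'.symmDiff hB'.bd) hA'.bd hb
  have hA0 : A = ∅ := by
    by_contra h; exact hF.acyc A hA h h2
  have hB0 : B = ∅ := by
    by_contra h
    apply hT.acyc B hB h
    rw [hA0] at h1
    rw [← h1]
    exact (bot_symmDiff _).symm
  apply hne
  rw [hA0, hB0]; simp [cone]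

lemma card_pos_of_sub {k : ℕ} {V : Finset ℕ} {T : Ch} (h : T ⊆ V.powersetCard k) (hT : T.Nonempty) :
    k ≤ V.card := by
  obtain ⟨σ, hσ⟩ := hT
  have := mem_powersetCard.1 (h hσ)
  rw [← this.2]; exact card_le_card this.1

lemma good_step {k v : ℕ} {V : Finset ℕ} {F T' : Ch} (hv : v ∈ V) (hF : Good k (V.erase v) F)
    (hT : Good (k + 1) (V.erase v) T') : Good (k + 1) V (cone v F ∪ T') := by
  have hsub : cone v F ∪ T' ⊆ V.powersetCard (k + 1 + 1) := by
    intro σ hσ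
    rw [mem_union, mem_cone hF.noV] at hσ
    rw [mem_powersetCard]
    rcases hσ with ⟨h1, h2⟩ | h
    · have := mem_powersetCard.1 (hF.sub h2)
      rw [card_erase_of_mem h1] at this
      have hp := card_pos.2 ⟨v, h1⟩
      refine ⟨?_, by omega⟩
      intro x hx
      by_cases hxv : x = v
      · exact hxv ▸ hv
      · exact mem_of_mem_erase (this.1 (mem_erase.2 ⟨hxv, hx⟩))
    · have := mem_powersetCard.1 (hT.sub h)
      exact ⟨this.1.trans (erase_subset _ _), this.2⟩
  have hce : (V.erase v).card = V.card - 1 := card_erase_of_mem hv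
  refine ⟨hsub, acyc_step hF hT, ?_, ?_, ?_⟩
  · intro Z hZ hb
    exact ⟨_, fill_step_aux hF hT hZ hb⟩
  · rcases (cone v F ∪ T').eq_empty_or_nonempty with h0 | h0
    · rw [h0]; simp
    · have h2 := card_pos_of_sub hsub h0
      have h3 := hF.card
      have h4 := hT.card
      rw [hce] at h3 h4
      rw [card_union_of_disjoint (disj_cone hF.noV hT.noV), card_cone hF.noV]
      obtain ⟨m, hm⟩ : ∃ m, V.card = m + 2 := ⟨V.card - 2, by omega⟩
      rw [hm] at h3 h4 ⊢
      have : (m + 2 - 1).choose (k + 1) = m.choose k + m.choose (k + 1) := Nat.choose_succ_succ _ _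
      rw [this]
      exact Nat.add_le_add h3 h4
  · intro R hR
    obtain ⟨A, B, hA, hB, rfl⟩ := sub_split hF.noV hR hT.noV
    have hA' := hF.noV.mono hA
    have hB' := hT.noV.mono hB
    rw [card_union_of_disjoint (disj_cone hA' hB'), card_cone hA']
    have h4 := hT.supp B hB
    rw [hce] at h4
    have h5 : (V.card - 1 - 2).choose (k + 1 - 1) ≤ (V.card - 2).choose (k + 1 - 1) :=
      Nat.choose_le_choose _ (by omega)
    have h6 : B.card ≤ (_root_.supp B).card * (V.card - 2).choose (k + 1 - 1) :=
      h4.trans (Nat.mul_le_mul_left _ h5)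
    rcases A.eq_empty_or_nonempty with h0 | h0
    · subst h0
      simpa [cone] using h6
    · have h3 := (card_le_card hA).trans hF.card
      rw [hce] at h3
      have hs : insert v (_root_.supp B) ⊆ _root_.supp (cone v A ∪ B) := by
        apply insert_subset
        · obtain ⟨σ, hσ⟩ := h0
          rw [mem_supp]
          exact ⟨insert v σ, mem_union_left _ (mem_image_of_mem _ hσ), mem_insert_self _ _⟩
        · exact supp_mono subset_union_right
      have hc := card_le_card hs
      rw [card_insert_of_notMem] at hc
      · calc A.card + B.card ≤ (V.card - 2).choose k + (_root_.supp B).card * (V.card - 2).choose k :=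
              Nat.add_le_add h3 h6
          _ = ((_root_.supp B).card + 1) * (V.card - 2).choose k := by ring
          _ ≤ _ := Nat.mul_le_mul_right _ hc
      · rw [mem_supp]
        rintro ⟨σ, h1, h2⟩
        exact hB' σ h1 h2

lemma fill_step {k v : ℕ} {V : Finset ℕ} {F T' Z : Ch} (hF : Good k (V.erase v) F)
    (hT : Good (k + 1) (V.erase v) T')
    (hZ : Z ⊆ V.powersetCard (k + 1)) (hb : bd Z = ∅) :
    (fill Z (cone v F ∪ T')).card = (fill (link v Z) F).card + (fill (nxt v Z F) T').card := by
  obtain ⟨h1, h2⟩ := fill_step_aux hF hT hZ hb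
  rw [fill_eq (acyc_step hF hT) h1 h2]
  obtain ⟨h1, h2⟩ := hF.fill_spec (link_sub (v := v) hZ) (cyc_split hb).2
  obtain ⟨h3, h4⟩ := hT.fill_spec (nxt_sub hF hZ hb) (nxt_bd hF hZ hb)
  rw [card_union_of_disjoint (disj_cone (hF.noV.mono h1) (hT.noV.mono h3)),
    card_cone (hF.noV.mono h1)]

lemma fill_pos {k : ℕ} {V : Finset ℕ} {T Z : Ch} (h : Good k V T)
    (hZ : Z ⊆ V.powersetCard k) (hb : bd Z = ∅) (hne : Z ≠ ∅) : 1 ≤ (fill Z T).card := by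
  obtain ⟨h1, h2⟩ := h.fill_spec hZ hb
  rw [Nat.one_le_iff_ne_zero, Ne, card_eq_zero]
  intro h0
  rw [h0, bd_empty] at h2
  exact hne h2.symm

/-- In a cycle, `u` stays in the support after deletion of `v ≠ u`. -/
lemma survive {Z : Ch} (hb : bd Z = ∅) {u v : ℕ} (hu : u ∈ supp Z) (huv : u ≠ v) :
    ∃ x ∈ del v Z, u ∈ x := by
  obtain ⟨σ, hσ, huσ⟩ := mem_supp.1 hu
  by_cases hv : v ∈ σ
  · have h1 : σ.erase v ∈ link v Z := by
      rw [mem_link]; exact ⟨by simp, by rwa [insert_erase hv]⟩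
    rw [← (cyc_split hb).1, mem_bd] at h1
    obtain ⟨x, hx⟩ := Finset.card_pos.1 h1.pos
    rw [mem_filter] at hx
    exact ⟨x, hx.1, hx.2.1 (mem_erase.2 ⟨huv, huσ⟩)⟩
  · exact ⟨σ, mem_filter.2 ⟨hσ, hv⟩, huσ⟩

lemma link_empty {v : ℕ} {Z : Ch} (h : v ∉ supp Z) : link v Z = ∅ := by
  apply eq_empty_of_forall_notMem
  intro σ hσ
  rw [mem_link] at hσ
  exact h (mem_supp.2 ⟨_, hσ.2, mem_insert_self _ _⟩)

lemma link_ne_empty {v : ℕ} {Z : Ch} (h : v ∈ supp Z) : link v Z ≠ ∅ := by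
  obtain ⟨σ, hσ, h2⟩ := mem_supp.1 h
  apply ne_empty_of_mem (a := σ.erase v)
  rw [mem_link]
  exact ⟨by simp, by rwa [insert_erase h2]⟩

lemma fill_empty {T : Ch} (hT : IsAcyclic T) : fill ∅ T = ∅ :=
  fill_eq hT (empty_subset _) bd_empty

lemma del_eq_self {v : ℕ} {Z : Ch} (h : v ∉ supp Z) : del v Z = Z := by
  apply filter_true_of_mem
  intro σ hσ hv
  exact h (mem_supp.2 ⟨σ, hσ, hv⟩)

lemma nxt_of_notMem {v : ℕ} {Z F : Ch} (hF : IsAcyclic F) (h : v ∉ supp Z) : nxt v Z F = Z := by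
  rw [nxt, link_empty h, fill_empty hF, del_eq_self h]
  exact symmDiff_bot _

lemma good_hypertree {d : ℕ} {V : Finset ℕ} {T : Ch} (h : Good d V T) : IsHypertreeOn V d T := by
  have hs : simplices V d = V.powersetCard (d + 1) := by
    ext σ; simp [simplices, mem_powersetCard]
  refine ⟨hs ▸ h.sub, h.acyc, ?_⟩
  intro G hTG hG hac
  by_contra hne
  obtain ⟨σ, hσ, hσT⟩ : ∃ σ ∈ G, σ ∉ T := by
    by_contra hcon
    push Not at hcon
    exact hne (Subset.antisymm hcon hTG)
  rw [hs] at hG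
  have hσ' := mem_powersetCard.1 (hG hσ)
  obtain ⟨F, hF, hFb⟩ := h.fills (bd {σ}) (by
    intro τ hτ
    rw [bd_single] at hτ
    exact mem_powersetCard.2 ⟨hτ.1.trans hσ'.1, by omega⟩) (bd_bd_single σ)
  refine hac (F ∆ {σ}) (symmDiff_sub (hF.trans hTG) (singleton_subset_iff.2 hσ)) ?_ ?_
  · apply ne_empty_of_mem (a := σ)
    rw [mem_symmDiff]
    right
    exact ⟨mem_singleton_self _, fun h' => hσT (hF h')⟩
  · rw [bd_symmDiff, hFb]; exact symmDiff_self _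


abbrev Fn := (Ch → ℝ) →ₗ[ℝ] ℝ

structure IsDist (k : ℕ) (V : Finset ℕ) (E : Fn) : Prop where
  mono : ∀ φ ψ : Ch → ℝ, (∀ T, Good k V T → φ T ≤ ψ T) → E φ ≤ E ψ
  one : E (fun _ => 1) = 1

noncomputable def ind (x : Finset ℕ) : Ch → ℝ := fun T => if x ∈ T then 1 else 0

noncomputable def vol (Z : Ch) : Ch → ℝ := fun T => ((fill Z T).card : ℝ)

lemma Fn.const {k : ℕ} {V : Finset ℕ} {E : Fn} (h : IsDist k V E) (c : ℝ) :
    E (fun _ => c) = c := by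
  have : (fun _ : Ch => c) = c • (fun _ : Ch => (1 : ℝ)) := by
    funext; simp
  rw [this, map_smul, h.one]; simp

lemma IsDist.lb {k : ℕ} {V : Finset ℕ} {E : Fn} (h : IsDist k V E) (c : ℝ) (φ : Ch → ℝ)
    (hc : ∀ T, Good k V T → c ≤ φ T) : c ≤ E φ := by
  rw [← Fn.const h c]; exact h.mono _ _ hc

lemma IsDist.ub {k : ℕ} {V : Finset ℕ} {E : Fn} (h : IsDist k V E) (c : ℝ) (φ : Ch → ℝ)
    (hc : ∀ T, Good k V T → φ T ≤ c) : E φ ≤ c := by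
  conv_rhs => rw [← Fn.const h c]
  exact h.mono _ _ hc

lemma Fn.mul (E : Fn) (c : ℝ) (φ : Ch → ℝ) : E (fun T => c * φ T) = c * E φ := by
  have : (fun T : Ch => c * φ T) = c • φ := by funext; simp
  rw [this, map_smul]; simp

lemma Fn.add (E : Fn) (φ ψ : Ch → ℝ) : E (fun T => φ T + ψ T) = E φ + E ψ :=
  map_add E φ ψ

lemma Fn.sub (E : Fn) (φ ψ : Ch → ℝ) : E (fun T => φ T - ψ T) = E φ - E ψ :=
  map_sub E φ ψ

lemma Fn.sum {ι : Type} (E : Fn) (S : Finset ι) (φ : ι → Ch → ℝ) :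
    E (fun T => ∑ i ∈ S, φ i T) = ∑ i ∈ S, E (φ i) := by
  rw [← map_sum]; congr 1; funext T; simp

def coneE (v : ℕ) (A B : Fn) : Fn where
  toFun φ := A (fun F => B (fun T' => φ (cone v F ∪ T')))
  map_add' φ ψ := by
    rw [← Fn.add]; congr 1; funext F; exact Fn.add B _ _
  map_smul' c φ := by
    simp only [RingHom.id_apply, smul_eq_mul]
    rw [← Fn.mul]; congr 1; funext F; exact Fn.mul B _ _

lemma coneE_apply (v : ℕ) (A B : Fn) (φ : Ch → ℝ) :
    coneE v A B φ = A (fun F => B (fun T' => φ (cone v F ∪ T'))) := rfl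

lemma coneE_dist {k v : ℕ} {V : Finset ℕ} {A B : Fn} (hv : v ∈ V)
    (hA : IsDist k (V.erase v) A) (hB : IsDist (k + 1) (V.erase v) B) :
    IsDist (k + 1) V (coneE v A B) := by
  constructor
  · intro φ ψ h
    apply hA.mono
    intro F hF
    apply hB.mono
    intro T hT
    exact h _ (good_step hv hF hT)
  · rw [coneE_apply, hB.one, hA.one]

noncomputable def mix (S : Finset ℕ) (f : ℕ → Fn) : Fn := (S.card : ℝ)⁻¹ • ∑ v ∈ S, f v

lemma mix_apply {S : Finset ℕ} (hS : S.Nonempty) (f : ℕ → Fn) (φ : Ch → ℝ) :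
    (S.card : ℝ) * mix S f φ = ∑ v ∈ S, f v φ := by
  have : (S.card : ℝ) ≠ 0 := by
    have := hS.card_pos; positivity
  simp [mix, this]

lemma mix_dist {k : ℕ} {V S : Finset ℕ} (hS : S.Nonempty) {f : ℕ → Fn}
    (hf : ∀ v ∈ S, IsDist k V (f v)) : IsDist k V (mix S f) := by
  have hp : (0 : ℝ) < S.card := by exact_mod_cast hS.card_pos
  constructor
  · intro φ ψ h
    refine le_of_mul_le_mul_left ?_ hp
    rw [mix_apply hS, mix_apply hS]
    exact sum_le_sum fun v hv => (hf v hv).mono _ _ h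
  · refine mul_left_cancel₀ hp.ne' ?_
    rw [mix_apply hS, sum_congr rfl fun v hv => (hf v hv).one]
    simp

structure OK (k : ℕ) (c : ℝ) (V : Finset ℕ) (E : Fn) : Prop where
  dist : IsDist k V E
  prob : ∀ x, (V.card : ℝ) * E (ind x) ≤ k + 1
  vol : ∀ Z ⊆ V.powersetCard k, bd Z = ∅ → Z ≠ ∅ → c * (V.card - 1).choose k ≤ E (vol Z)

lemma cone_lb {k v : ℕ} {V : Finset ℕ} {A B : Fn}
    (hA : IsDist k (V.erase v) A) (hB : IsDist (k + 1) (V.erase v) B) {Z : Ch}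
    (hZ : Z ⊆ V.powersetCard (k + 1)) (hb : bd Z = ∅) (φ : Ch → ℝ)
    (hφ : ∀ F, Good k (V.erase v) F → φ F ≤ B (vol (nxt v Z F))) :
    A (vol (link v Z)) + A φ ≤ coneE v A B (vol Z) := by
  rw [← Fn.add, coneE_apply]
  apply hA.mono
  intro F hF
  have : vol (link v Z) F + B (vol (nxt v Z F)) ≤ B (fun T' => vol Z (cone v F ∪ T')) := by
    rw [← Fn.const hB (vol (link v Z) F), ← Fn.add]
    apply hB.mono
    intro T hT
    simp only [vol]
    rw [fill_step hF hT hZ hb]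
    push_cast
    exact le_rfl
  linarith [hφ F hF]

lemma cone_ind_mem {k v : ℕ} {V : Finset ℕ} {A B : Fn}
    (hA : IsDist k (V.erase v) A) (hB : IsDist (k + 1) (V.erase v) B) {x : Finset ℕ}
    (hx : v ∈ x) : coneE v A B (ind x) ≤ A (ind (x.erase v)) := by
  rw [coneE_apply]
  apply hA.mono
  intro F hF
  apply hB.ub
  intro T hT
  simp only [ind, mem_union, mem_cone hF.noV]
  have : x ∉ T := fun h => hT.noV x h hx
  simp [this, hx]

lemma cone_ind_notMem {k v : ℕ} {V : Finset ℕ} {A B : Fn}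
    (hA : IsDist k (V.erase v) A) {x : Finset ℕ} (hB : IsDist (k + 1) (V.erase v) B)
    (hx : v ∉ x) : coneE v A B (ind x) ≤ B (ind x) := by
  rw [coneE_apply]
  apply hA.ub
  intro F hF
  apply hB.mono
  intro T hT
  simp only [ind, mem_union, mem_cone hF.noV]
  simp [hx]

lemma ind_nonpos {k : ℕ} {V : Finset ℕ} {E : Fn} (h : IsDist k V E) {x : Finset ℕ}
    (hx : x ∉ V.powersetCard (k + 1)) : E (ind x) ≤ 0 := by
  apply h.ub
  intro T hT
  have : x ∉ T := fun h' => hx (hT.sub h')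
  simp [ind, this]

lemma vol_nonneg {k : ℕ} {V : Finset ℕ} {E : Fn} (h : IsDist k V E) (Z : Ch) : 0 ≤ E (vol Z) :=
  h.lb _ _ fun T _ => by simp [vol]

lemma supp_sub {k : ℕ} {V : Finset ℕ} {Z : Ch} (hZ : Z ⊆ V.powersetCard k) : supp Z ⊆ V := by
  intro u hu
  obtain ⟨σ, h1, h2⟩ := mem_supp.1 hu
  exact (mem_powersetCard.1 (hZ h1)).1 h2

lemma survive_exp {k v : ℕ} {V : Finset ℕ} {A : Fn} {c : ℝ} (hv : v ∈ V)
    (hA : OK k c (V.erase v) A) {Z : Ch}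
    (hZ : Z ⊆ V.powersetCard (k + 1)) (hb : bd Z = ∅) :
    ((supp Z).erase v).card * (1 - (k + 1) / ((V.card : ℝ) - 1)) ≤
      A (fun F => ((supp (nxt v Z F)).card : ℝ)) := by
  have hx : ∀ u, ∃ x, u ∈ (supp Z).erase v → x ∈ del v Z ∧ u ∈ x := by
    intro u
    by_cases hu : u ∈ (supp Z).erase v
    · rw [mem_erase] at hu
      obtain ⟨x, h1, h2⟩ := survive hb hu.2 hu.1
      exact ⟨x, fun _ => ⟨h1, h2⟩⟩
    · exact ⟨∅, fun h => absurd h hu⟩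
  choose x hx using hx
  have h1 : A (fun F => ∑ u ∈ (supp Z).erase v, (1 - ind (x u) F)) ≤
      A (fun F => ((supp (nxt v Z F)).card : ℝ)) := by
    apply hA.dist.mono
    intro F hF
    have h2 : ((supp Z).erase v).filter (fun u => x u ∉ F) ⊆ supp (nxt v Z F) := by
      intro u hu
      rw [mem_filter] at hu
      rw [mem_supp]
      refine ⟨x u, ?_, (hx u hu.1).2⟩
      rw [nxt, mem_symmDiff]
      left
      refine ⟨(hx u hu.1).1, fun h => hu.2 ?_⟩
      exact (hF.fill_spec (link_sub hZ) (cyc_split hb).2).1 h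
    have h3 : ∑ u ∈ (supp Z).erase v, (1 - ind (x u) F)
        = ((((supp Z).erase v).filter (fun u => x u ∉ F)).card : ℝ) := by
      rw [card_filter]
      push_cast
      apply sum_congr rfl
      intro u _
      by_cases h : x u ∈ F <;> simp [ind, h]
    rw [h3]
    exact_mod_cast card_le_card h2
  refine le_trans ?_ h1
  rw [Fn.sum, ← nsmul_eq_mul]
  apply card_nsmul_le_sum
  intro u hu
  rw [Fn.sub, hA.dist.one]
  have h2 := hA.prob (x u)
  have h3 : ((V.erase v).card : ℝ) = (V.card : ℝ) - 1 := by
    rw [card_erase_of_mem hv, Nat.cast_sub (card_pos.2 ⟨v, hv⟩)]; simp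
  have h4 : 0 < (V.erase v).card := by
    apply card_pos.2
    rw [mem_erase] at hu
    exact ⟨u, mem_erase.2 ⟨hu.1, supp_sub hZ hu.2⟩⟩
  rw [h3] at h2
  have h5 : (0 : ℝ) < (V.card : ℝ) - 1 := by rw [← h3]; exact_mod_cast h4
  rw [sub_le_sub_iff_left, le_div_iff₀ h5]
  linarith

lemma supp_card_sum {W : Finset ℕ} {R : Ch} (h : supp R ⊆ W) :
    ((supp R).card : ℝ) = ∑ u ∈ W, (if u ∈ supp R then (1 : ℝ) else 0) := by
  rw [← Nat.cast_one, ← Nat.cast_zero]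
  simp only [← Nat.cast_ite]
  rw [← Nat.cast_sum, ← card_filter, filter_mem_eq_inter, inter_eq_right.2 h]

lemma half_exp {k v : ℕ} {V : Finset ℕ} {A : Fn} {c : ℝ} (hv : v ∈ V)
    (hA : OK k c (V.erase v) A) {Z : Ch} (hk : 2 * (k + 1) + 1 ≤ V.card)
    (hZ : Z ⊆ V.powersetCard (k + 1)) (hb : bd Z = ∅) :
    1 / 2 * A (fun F => ((supp (fill (link v Z) F)).card : ℝ)) ≤
      A (fun F => ((supp (nxt v Z F)).card : ℝ)) := by
  have e1 : A (fun F => ((supp (fill (link v Z) F)).card : ℝ)) ≤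
      ∑ u ∈ V.erase v, A (fun F => if u ∈ supp (fill (link v Z) F) then (1 : ℝ) else 0) := by
    rw [← Fn.sum]
    apply hA.dist.mono
    intro F hF
    exact (supp_card_sum (supp_sub
      ((hF.fill_spec (link_sub hZ) (cyc_split hb).2).1.trans hF.sub))).le
  have e2 : ∑ u ∈ V.erase v, A (fun F => if u ∈ supp (nxt v Z F) then (1 : ℝ) else 0) ≤
      A (fun F => ((supp (nxt v Z F)).card : ℝ)) := by
    rw [← Fn.sum]
    apply hA.dist.mono
    intro F hF
    exact (supp_card_sum (supp_sub (nxt_sub hF hZ hb))).ge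
  have e3 : ∀ u ∈ V.erase v,
      1 / 2 * A (fun F => if u ∈ supp (fill (link v Z) F) then (1 : ℝ) else 0) ≤
      A (fun F => if u ∈ supp (nxt v Z F) then (1 : ℝ) else 0) := by
    intro u hu
    by_cases hx : ∃ x ∈ del v Z, u ∈ x
    · obtain ⟨x, hx1, hx2⟩ := hx
      have f1 : A (fun F => if u ∈ supp (fill (link v Z) F) then (1 : ℝ) else 0) ≤ 1 := by
        apply hA.dist.ub
        intro F _
        split_ifs <;> norm_num
      have f2 : A (fun F => 1 - ind x F) ≤
          A (fun F => if u ∈ supp (nxt v Z F) then (1 : ℝ) else 0) := by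
        apply hA.dist.mono
        intro F hF
        by_cases h : x ∈ F
        · simp only [ind, h, if_true]
          split_ifs <;> norm_num
        · have : u ∈ supp (nxt v Z F) := by
            rw [mem_supp]
            refine ⟨x, ?_, hx2⟩
            rw [nxt, mem_symmDiff]
            left
            refine ⟨hx1, fun h' => h ?_⟩
            exact (hF.fill_spec (link_sub hZ) (cyc_split hb).2).1 h'
          simp [ind, h, this]
      rw [Fn.sub, hA.dist.one] at f2
      have f3 := hA.prob x
      have f4 : (2 * (k + 1) : ℝ) ≤ ((V.erase v).card : ℝ) := by
        rw [card_erase_of_mem hv]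
        have : 2 * (k + 1) ≤ V.card - 1 := by omega
        exact_mod_cast this
      have f5 : A (ind x) ≤ 1 / 2 := by
        by_contra hcon
        push Not at hcon
        have : (0 : ℝ) ≤ k := by positivity
        nlinarith
      linarith
    · have f0 : 0 ≤ A (fun F => if u ∈ supp (fill (link v Z) F) then (1 : ℝ) else 0) := by
        apply hA.dist.lb
        intro F _
        split_ifs <;> norm_num
      have f1 : A (fun F => if u ∈ supp (fill (link v Z) F) then (1 : ℝ) else 0) ≤
          A (fun F => if u ∈ supp (nxt v Z F) then (1 : ℝ) else 0) := by
        apply hA.dist.mono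
        intro F hF
        by_cases h : u ∈ supp (fill (link v Z) F)
        · have : u ∈ supp (nxt v Z F) := by
            obtain ⟨x, h1, h2⟩ := mem_supp.1 h
            rw [mem_supp]
            refine ⟨x, ?_, h2⟩
            rw [nxt, mem_symmDiff]
            right
            exact ⟨h1, fun h' => hx ⟨x, h', h2⟩⟩
          simp [h, this]
        · simp only [h, if_false]
          split_ifs <;> norm_num
      linarith
  calc _ ≤ 1 / 2 * ∑ u ∈ V.erase v,
        A (fun F => if u ∈ supp (fill (link v Z) F) then (1 : ℝ) else 0) := by linarith
    _ ≤ ∑ u ∈ V.erase v, A (fun F => if u ∈ supp (nxt v Z F) then (1 : ℝ) else 0) := by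
        rw [mul_sum]; exact sum_le_sum e3
    _ ≤ _ := e2

lemma hit_exp {k v : ℕ} {V : Finset ℕ} {A : Fn} {c : ℝ} (hv : v ∈ V) (hk1 : 1 ≤ k)
    (hA : OK k c (V.erase v) A) {Z : Ch} (hk : 2 * (k + 1) + 1 ≤ V.card)
    (hZ : Z ⊆ V.powersetCard (k + 1)) (hb : bd Z = ∅) (hvs : v ∈ supp Z) :
    c * ((V.card : ℝ) - 2) / (2 * k) ≤ A (fun F => ((supp (nxt v Z F)).card : ℝ)) := by
  have h1 := half_exp hv hA hk hZ hb
  have h2 := hA.vol (link v Z) (link_sub hZ) (cyc_split hb).2 (link_ne_empty hvs)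
  rw [card_erase_of_mem hv] at h2
  obtain ⟨m, hm⟩ : ∃ m, V.card = m + 3 := ⟨V.card - 3, by omega⟩
  obtain ⟨j, rfl⟩ : ∃ j, k = j + 1 := ⟨k - 1, by omega⟩
  have h3 : A (vol (link v Z)) ≤
      (m.choose j : ℝ) * A (fun F => ((supp (fill (link v Z) F)).card : ℝ)) := by
    rw [← Fn.mul]
    apply hA.dist.mono
    intro F hF
    have := hF.supp _ (hF.fill_spec (link_sub (v := v) hZ) (cyc_split hb).2).1
    rw [card_erase_of_mem hv, hm] at this
    have e : m + 3 - 1 - 2 = m := by omega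
    rw [e, Nat.add_sub_cancel, mul_comm] at this
    simp only [vol]
    exact_mod_cast this
  rw [hm] at h2
  have e : m + 3 - 1 - 1 = m + 1 := by omega
  rw [e] at h2
  have h4 : ((m + 1 : ℕ) : ℝ) * m.choose j = (m + 1).choose (j + 1) * ((j + 1 : ℕ) : ℝ) := by
    exact_mod_cast Nat.add_one_mul_choose_eq m j
  have h5 : (0 : ℝ) < m.choose j := by
    exact_mod_cast Nat.choose_pos (by omega)
  have h6 : (0 : ℝ) < ((j + 1 : ℕ) : ℝ) := by positivity
  have h7 : c * ((m + 1 : ℕ) : ℝ) / ((j + 1 : ℕ) : ℝ) ≤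
      A (fun F => ((supp (fill (link v Z) F)).card : ℝ)) := by
    rw [div_le_iff₀ h6]
    refine le_of_mul_le_mul_left ?_ h5
    calc (m.choose j : ℝ) * (c * ((m + 1 : ℕ) : ℝ)) =
        (c * (m + 1).choose (j + 1)) * ((j + 1 : ℕ) : ℝ) := by linear_combination c * h4
      _ ≤ _ := by
        rw [← mul_assoc]
        exact mul_le_mul_of_nonneg_right (h2.trans h3) h6.le
  refine le_trans (le_trans (le_of_eq ?_) (mul_le_mul_of_nonneg_left h7 (by norm_num : (0:ℝ) ≤ 1 / 2))) h1
  rw [hm]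
  push_cast
  field_simp
  ring


lemma supp_ge {k : ℕ} {V : Finset ℕ} {Z : Ch} (hZ : Z ⊆ V.powersetCard k) (hne : Z ≠ ∅) :
    k ≤ (supp Z).card := by
  obtain ⟨σ, hσ⟩ := nonempty_iff_ne_empty.2 hne
  rw [← (mem_powersetCard.1 (hZ hσ)).2]
  exact card_le_card fun u hu => mem_supp.2 ⟨σ, hσ, hu⟩

lemma good_small {k : ℕ} {V : Finset ℕ} (hV : V.card ≤ k) (hk : 1 ≤ k) :
    Good k V ∅ := by
  refine ⟨by simp, ?_, ?_, by simp, ?_⟩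
  · intro Y hY hne
    exact absurd (subset_empty.1 hY) hne
  · intro Z hZ hb
    refine ⟨∅, subset_rfl, ?_⟩
    rw [bd_empty]
    by_contra hne
    obtain ⟨σ, hσ⟩ := nonempty_iff_ne_empty.2 (Ne.symm hne)
    obtain ⟨h1, h2⟩ := mem_powersetCard.1 (hZ hσ)
    obtain ⟨u, hu⟩ : σ.Nonempty := card_pos.1 (by omega)
    have hus : u ∈ supp Z := mem_supp.2 ⟨σ, hσ, hu⟩
    have h3 := (cyc_split (v := u) hb).1
    have h4 := link_ne_empty hus
    have h5 : (del u Z).Nonempty := by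
      rw [nonempty_iff_ne_empty]
      intro h
      rw [h, bd_empty] at h3
      exact h4 h3.symm
    have h6 := card_pos_of_sub (del_sub hZ) h5
    rw [card_erase_of_mem (h1 hu)] at h6
    omega
  · intro R hR
    rw [subset_empty.1 hR]; simp

def ev (T : Ch) : Fn := LinearMap.proj T

lemma ev_apply (T : Ch) (φ : Ch → ℝ) : ev T φ = φ T := rfl

lemma ev_dist {k : ℕ} {V : Finset ℕ} {T : Ch} (h : Good k V T) : IsDist k V (ev T) :=
  ⟨fun φ ψ h' => h' T h, rfl⟩

def Lin (k : ℕ) (c : ℝ) (V : Finset ℕ) (E : Fn) : Prop :=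
  ∀ Z ⊆ V.powersetCard k, bd Z = ∅ →
    c / 2 * (supp Z).card * (V.card - 1).choose k ≤ V.card * E (vol Z)

lemma erase_card_ind (S : Finset ℕ) (v : ℕ) :
    ((S.erase v).card : ℝ) = S.card - (if v ∈ S then (1 : ℝ) else 0) := by
  split_ifs with h
  · rw [card_erase_of_mem h, Nat.cast_sub (card_pos.2 ⟨v, h⟩)]; simp
  · rw [erase_eq_of_notMem h]; simp

section step
variable {k n : ℕ} {b c : ℝ} {V : Finset ℕ} {A B : ℕ → Fn}

lemma step_prob (hk : 1 ≤ k) (hn : 1 ≤ n) (hV : V.card = n + 1)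
    (hA : ∀ v ∈ V, OK k c (V.erase v) (A v)) (hB : ∀ v ∈ V, OK (k + 1) b (V.erase v) (B v))
    (x : Finset ℕ) :
    (V.card : ℝ) * mix V (fun v => coneE v (A v) (B v)) (ind x) ≤ (k + 1 : ℕ) + 1 := by
  have hne : V.Nonempty := card_pos.1 (by omega)
  have hd : ∀ v ∈ V, IsDist (k + 1) V (coneE v (A v) (B v)) :=
    fun v hv => coneE_dist hv (hA v hv).dist (hB v hv).dist
  have hp : (0 : ℝ) ≤ V.card := by positivity
  by_cases hx : x ∈ V.powersetCard (k + 1 + 1)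
  · obtain ⟨hx1, hx2⟩ := mem_powersetCard.1 hx
    rw [mix_apply hne]
    have hn' : (0 : ℝ) < n := by exact_mod_cast hn
    have hc : ∀ v ∈ V, ((V.erase v).card : ℝ) = n := by
      intro v hv
      rw [card_erase_of_mem hv, hV]; simp
    have h1 : ∀ v ∈ V, (coneE v (A v) (B v)) (ind x) ≤
        (k + 2) / n - (if v ∈ x then (1 : ℝ) else 0) / n := by
      intro v hv
      split_ifs with h
      · refine (cone_ind_mem (hA v hv).dist (hB v hv).dist h).trans ?_
        have := (hA v hv).prob (x.erase v)
        rw [hc v hv] at this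
        rw [← sub_div, le_div_iff₀ hn']
        linarith
      · refine (cone_ind_notMem (hA v hv).dist (hB v hv).dist h).trans ?_
        have := (hB v hv).prob x
        rw [hc v hv] at this
        push_cast at this
        rw [← sub_div, le_div_iff₀ hn']
        linarith
    refine (sum_le_sum h1).trans (le_of_eq ?_)
    rw [sum_sub_distrib, ← sum_div, ← sum_div, sum_ite_mem, inter_eq_right.2 hx1]
    simp only [sum_const, hV, hx2, nsmul_eq_mul]
    push_cast
    field_simp
    ring
  · have := ind_nonpos (mix_dist hne hd) hx
    have : (V.card : ℝ) * mix V (fun v => coneE v (A v) (B v)) (ind x) ≤ 0 :=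
      mul_nonpos_of_nonneg_of_nonpos hp this
    push_cast
    have : (0 : ℝ) ≤ k := by positivity
    linarith

lemma link_vol {v : ℕ} (hv : v ∈ V) (hV : V.card = n + 1)
    {A : Fn} (hA : OK k c (V.erase v) A) {Z : Ch}
    (hZ : Z ⊆ V.powersetCard (k + 1)) (hb : bd Z = ∅) :
    (if v ∈ supp Z then (1 : ℝ) else 0) * (c * (n - 1).choose k) ≤ A (vol (link v Z)) := by
  split_ifs with h
  · have := hA.vol (link v Z) (link_sub hZ) (cyc_split hb).2 (link_ne_empty h)
    rw [card_erase_of_mem hv, hV, Nat.add_sub_cancel] at this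
    linarith
  · rw [zero_mul]; exact vol_nonneg hA.dist _

lemma pascal_facts (hn : k + 1 ≤ n) :
    ((n.choose (k + 1) : ℕ) : ℝ) = (n - 1).choose k + (n - 1).choose (k + 1) ∧
    ((k : ℝ) + 1) * (n - 1).choose (k + 1) = (n - 1 - k) * (n - 1).choose k := by
  obtain ⟨m, rfl⟩ : ∃ m, n = m + 1 := ⟨n - 1, by omega⟩
  simp only [Nat.add_sub_cancel]
  constructor
  · rw [Nat.choose_succ_succ]; push_cast; rfl
  · have := Nat.choose_succ_right_eq m k
    have h2 : (((m - k : ℕ)) : ℝ) = m - k := by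
      rw [Nat.cast_sub (by omega)]
    have h3 : (m.choose (k + 1) : ℝ) * (k + 1) = m.choose k * ((m - k : ℕ) : ℝ) := by
      exact_mod_cast this
    rw [h2] at h3
    push_cast
    linarith

lemma lin_phi {v : ℕ} (hn : 1 ≤ n) (hv : v ∈ V) (hV : V.card = n + 1) {B : Fn}
    (hL : Lin (k + 1) c (V.erase v) B) {Z : Ch} {F : Ch} (hF : Good k (V.erase v) F)
    (hZ : Z ⊆ V.powersetCard (k + 1)) (hb : bd Z = ∅) :
    (c / 2 * (n - 1).choose (k + 1) / n) * (supp (nxt v Z F)).card ≤ B (vol (nxt v Z F)) := by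
  have := hL _ (nxt_sub hF hZ hb) (nxt_bd hF hZ hb)
  rw [card_erase_of_mem hv, hV, Nat.add_sub_cancel] at this
  have hn' : (0 : ℝ) < n := by exact_mod_cast hn
  rw [div_mul_eq_mul_div, div_le_iff₀ hn']
  linarith

lemma step_lin (hc : 0 ≤ c) (hn : k + 1 ≤ n) (hV : V.card = n + 1)
    (hA : ∀ v ∈ V, OK k c (V.erase v) (A v)) (hB : ∀ v ∈ V, OK (k + 1) b (V.erase v) (B v))
    (hL : ∀ v ∈ V, Lin (k + 1) c (V.erase v) (B v)) :
    Lin (k + 1) c V (mix V (fun v => coneE v (A v) (B v))) := by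
  intro Z hZ hb
  have hne : V.Nonempty := card_pos.1 (by omega)
  have hn' : (0 : ℝ) < n := by exact_mod_cast (show 0 < n by omega)
  rw [mix_apply hne, hV, Nat.add_sub_cancel]
  obtain ⟨p1, p2⟩ := pascal_facts hn
  rw [p1]
  set C1 : ℝ := (((n - 1).choose k : ℕ) : ℝ) with hC1
  set C2 : ℝ := (((n - 1).choose (k + 1) : ℕ) : ℝ) with hC2
  have hC1p : 0 ≤ C1 := by positivity
  have hC2p : 0 ≤ C2 := by positivity
  set s : ℝ := (((supp Z).card : ℕ) : ℝ) with hs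
  have hsp : 0 ≤ s := by positivity
  have h1 : ∀ v ∈ V, (if v ∈ supp Z then (1 : ℝ) else 0) * (c * C1) +
      (c / 2 * C2 / n) * ((s - (if v ∈ supp Z then (1 : ℝ) else 0)) * (1 - (k + 1) / n)) ≤
      (coneE v (A v) (B v)) (vol Z) := by
    intro v hv
    refine le_trans ?_ (cone_lb (hA v hv).dist (hB v hv).dist hZ hb _
      (fun F hF => lin_phi (by omega) hv hV (hL v hv) hF hZ hb))
    refine add_le_add (link_vol hv hV (hA v hv) hZ hb) ?_
    rw [Fn.mul]
    refine mul_le_mul_of_nonneg_left ?_ (by positivity)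
    have := survive_exp hv (hA v hv) hZ hb
    rw [erase_card_ind, hV] at this
    push_cast at this
    rwa [add_sub_cancel_right] at this
  refine le_trans ?_ (sum_le_sum h1)
  rw [sum_add_distrib, ← sum_mul, ← mul_sum, ← sum_mul, sum_sub_distrib,
    ← supp_card_sum (supp_sub hZ), ← hs]
  simp only [sum_const, hV, nsmul_eq_mul]
  push_cast
  have e : s * (c * C1) + c / 2 * C2 / n * (((n + 1) * s - s) * (1 - (k + 1) / n)) =
      s * (c * C1) + c / 2 * s * (C2 - ((k + 1) * C2) / n) := by
    field_simp
    ring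
  rw [e, p2]
  have h2 : (n - 1 - k) * C1 / n ≤ C1 := by
    rw [div_le_iff₀ hn']
    have : (0 : ℝ) ≤ k := by positivity
    nlinarith
  have h3 : c / 2 * s * (C2 - C1) ≤ c / 2 * s * (C2 - (n - 1 - k) * C1 / n) := by
    apply mul_le_mul_of_nonneg_left _ (by positivity)
    linarith
  linarith

lemma step_vol (hk : 1 ≤ k) (hc : 0 < c) (hc1 : c ≤ 1) (hb0 : 0 ≤ b) (hb1 : b ≤ c ^ 2 / (16 * k))
    (hn : 2 * k + 2 ≤ n) (hV : V.card = n + 1)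
    (hA : ∀ v ∈ V, OK k c (V.erase v) (A v)) (hB : ∀ v ∈ V, OK (k + 1) b (V.erase v) (B v))
    (hL : ∀ v ∈ V, Lin (k + 1) c (V.erase v) (B v)) {Z : Ch}
    (hZ : Z ⊆ V.powersetCard (k + 1)) (hb : bd Z = ∅) (hZne : Z ≠ ∅) :
    b * (V.card - 1).choose (k + 1) ≤ mix V (fun v => coneE v (A v) (B v)) (vol Z) := by
  have hne : V.Nonempty := card_pos.1 (by omega)
  have hn' : (0 : ℝ) < n := by exact_mod_cast (show 0 < n by omega)
  have hk' : (1 : ℝ) ≤ k := by exact_mod_cast hk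
  refine le_of_mul_le_mul_left ?_ (show (0 : ℝ) < V.card by exact_mod_cast hne.card_pos)
  rw [mix_apply hne, hV, Nat.add_sub_cancel]
  obtain ⟨p1, p2⟩ := pascal_facts (show k + 1 ≤ n by omega)
  rw [p1]
  have hs1 : ((k : ℝ) + 1) ≤ (supp Z).card := by exact_mod_cast supp_ge hZ hZne
  set C1 : ℝ := (((n - 1).choose k : ℕ) : ℝ) with hC1
  set C2 : ℝ := (((n - 1).choose (k + 1) : ℕ) : ℝ) with hC2
  have hC1p : 0 ≤ C1 := by positivity
  have hC2p : 0 ≤ C2 := by positivity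
  set s : ℝ := (((supp Z).card : ℕ) : ℝ) with hs
  have hbk : 16 * k * b ≤ c ^ 2 := by
    rw [le_div_iff₀ (by positivity)] at hb1; linarith
  have hn2 : (2 : ℝ) ≤ n := by exact_mod_cast (show 2 ≤ n by omega)
  have h1 : ∀ v ∈ V, (if v ∈ supp Z then (1 : ℝ) else 0) * (c * C1) +
      (if v ∈ supp Z then (1 : ℝ) else 0) * (b * C2) + b * C2 ≤
      (coneE v (A v) (B v)) (vol Z) := by
    intro v hv
    by_cases hvs : v ∈ supp Z
    · refine le_trans ?_ (cone_lb (hA v hv).dist (hB v hv).dist hZ hb _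
        (fun F hF => lin_phi (by omega) hv hV (hL v hv) hF hZ hb))
      rw [add_assoc]
      refine add_le_add (link_vol hv hV (hA v hv) hZ hb) ?_
      rw [Fn.mul, if_pos hvs]
      refine le_trans ?_ (mul_le_mul_of_nonneg_left
        (hit_exp hv hk (hA v hv) (by omega) hZ hb hvs) (by positivity))
      rw [hV]
      push_cast
      rw [← hC2]
      have e : c / 2 * C2 / n * (c * ((n : ℝ) + 1 - 2) / (2 * k)) =
          C2 * ((c ^ 2 * (n - 1)) / (4 * k * n)) := by
        field_simp
        ring
      rw [e]
      have : 2 * b ≤ (c ^ 2 * (n - 1)) / (4 * k * n) := by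
        rw [le_div_iff₀ (by positivity)]
        nlinarith [mul_le_mul_of_nonneg_right hbk hn'.le, sq_nonneg c]
      nlinarith [mul_le_mul_of_nonneg_left this hC2p]
    · have hh : ∀ F, Good k (V.erase v) F → b * C2 ≤ (B v) (vol (nxt v Z F)) := by
        intro F hF
        have e := nxt_of_notMem hF.acyc hvs
        have h3 := nxt_sub hF hZ hb
        rw [e] at h3 ⊢
        have := (hB v hv).vol Z h3 hb hZne
        rwa [card_erase_of_mem hv, hV, Nat.add_sub_cancel] at this
      have := cone_lb (hA v hv).dist (hB v hv).dist hZ hb _ hh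
      rw [Fn.const (hA v hv).dist] at this
      have h0 := vol_nonneg (hA v hv).dist (link v Z)
      rw [if_neg hvs]
      linarith
  refine le_trans ?_ (sum_le_sum h1)
  rw [sum_add_distrib, sum_add_distrib, ← sum_mul, ← sum_mul,
    ← supp_card_sum (supp_sub hZ), ← hs]
  simp only [sum_const, hV, nsmul_eq_mul]
  push_cast
  have h2 : (k + 1) * (c * C1 + b * C2) ≤ s * (c * C1 + b * C2) :=
    mul_le_mul_of_nonneg_right hs1 (by positivity)
  have h3 : (k + 2) * b ≤ (k + 1) * c := by
    have : b * 16 ≤ c := by nlinarith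
    nlinarith
  have h4 := mul_le_mul_of_nonneg_right h3 hC1p
  have h5 : (k + 1) * (c * C1 + b * C2) = (k + 1) * c * C1 + b * ((n - 1 - k) * C1) := by
    rw [← p2]; ring
  nlinarith

end step

theorem step_thm {k : ℕ} {b c : ℝ} (hk : 1 ≤ k) (hc : 0 < c) (hc1 : c ≤ 1) (hb0 : 0 ≤ b)
    (hb1 : b ≤ c ^ 2 / (16 * k)) (hb2 : b * 2 ^ (2 * k + 1) ≤ 1)
    (h : ∀ V, ∃ E, OK k c V E) : ∀ n, ∀ V : Finset ℕ, V.card = n →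
      ∃ E, OK (k + 1) b V E ∧ Lin (k + 1) c V E := by
  choose A hA using h
  intro n
  induction n with
  | zero =>
    intro V hV
    have hd := ev_dist (good_small (V := V) (k := k + 1) (by omega) (by omega))
    refine ⟨ev ∅, ⟨hd, ?_, ?_⟩, ?_⟩
    · intro x; rw [hV]; simp; positivity
    · intro Z _ _ _
      rw [hV]
      simp only [Nat.zero_sub, Nat.choose_zero_succ, Nat.cast_zero, mul_zero]
      exact vol_nonneg hd _
    · intro Z _ _
      rw [hV]
      simp
  | succ n ih =>
    intro V hV
    have hB : ∀ v, ∃ E, v ∈ V → OK (k + 1) b (V.erase v) E ∧ Lin (k + 1) c (V.erase v) E := by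
      intro v
      by_cases hv : v ∈ V
      · obtain ⟨E, hE⟩ := ih (V.erase v) (by rw [card_erase_of_mem hv, hV]; rfl)
        exact ⟨E, fun _ => hE⟩
      · exact ⟨0, fun h => absurd h hv⟩
    choose B hB using hB
    have hA' : ∀ v ∈ V, OK k c (V.erase v) (A (V.erase v)) := fun v _ => hA _
    have hB' : ∀ v ∈ V, OK (k + 1) b (V.erase v) (B v) := fun v hv => (hB v hv).1
    have hL' : ∀ v ∈ V, Lin (k + 1) c (V.erase v) (B v) := fun v hv => (hB v hv).2
    have hne : V.Nonempty := card_pos.1 (by omega)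
    have hd : IsDist (k + 1) V (mix V (fun v => coneE v (A (V.erase v)) (B v))) :=
      mix_dist hne fun v hv => coneE_dist hv (hA' v hv).dist (hB' v hv).dist
    refine ⟨mix V (fun v => coneE v (A (V.erase v)) (B v)), ⟨hd, ?_, ?_⟩, ?_⟩
    · intro x
      rcases Nat.eq_zero_or_pos n with rfl | hn
      · have := hd.ub 1 (ind x) (fun T _ => by simp only [ind]; split_ifs <;> norm_num)
        rw [hV]
        push_cast
        have : (0 : ℝ) ≤ k := by positivity
        linarith
      · exact step_prob hk hn hV hA' hB' x
    · intro Z hZ hb hZne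
      by_cases hn : 2 * k + 2 ≤ n
      · exact step_vol hk hc hc1 hb0 hb1 hn hV hA' hB' hL' hZ hb hZne
      · refine le_trans ?_ (hd.lb 1 _ fun T hT => ?_)
        · rw [hV, Nat.add_sub_cancel]
          refine le_trans (mul_le_mul_of_nonneg_left ?_ hb0) hb2
          have h1 : n.choose (k + 1) ≤ 2 ^ (2 * k + 1) :=
            (Nat.choose_le_two_pow n (k + 1)).trans (Nat.pow_le_pow_right (by norm_num) (by omega))
          exact_mod_cast h1
        · simp only [vol]
          exact_mod_cast fill_pos hT hZ hb hZne
    · by_cases hn : k + 1 ≤ n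
      · exact step_lin hc.le hn hV hA' hB' hL'
      · intro Z _ _
        rw [hV, Nat.add_sub_cancel, Nat.choose_eq_zero_of_lt (by omega)]
        have := vol_nonneg hd Z
        simp only [Nat.cast_zero, mul_zero]
        positivity

lemma bd_point (v : ℕ) : bd {{v}} = {∅} := by
  ext τ
  rw [bd_single, mem_singleton, card_singleton]
  constructor
  · rintro ⟨_, h⟩; exact card_eq_zero.1 (by omega)
  · rintro rfl; simp

lemma good_point {v : ℕ} {W : Finset ℕ} (hv : v ∈ W) : Good 0 W {{v}} := by
  have hb := bd_point v
  refine ⟨by simpa using hv, ?_, ?_, by simp, ?_⟩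
  · intro Y hY hne
    rcases subset_singleton_iff.1 hY with rfl | rfl
    · exact absurd rfl hne
    · rw [hb]; simp
  · intro Z hZ _
    rw [powersetCard_zero] at hZ
    rcases subset_singleton_iff.1 hZ with rfl | rfl
    · exact ⟨∅, by simp, bd_empty⟩
    · exact ⟨_, subset_rfl, hb⟩
  · intro R hR
    rcases subset_singleton_iff.1 hR with rfl | rfl
    · simp
    · simp [supp]

lemma mem_supp_one {W : Finset ℕ} {Z : Ch} (hZ : Z ⊆ W.powersetCard 1) {u : ℕ} :
    u ∈ supp Z ↔ {u} ∈ Z := by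
  rw [mem_supp]
  constructor
  · rintro ⟨σ, h1, h2⟩
    obtain ⟨a, rfl⟩ := card_eq_one.1 (mem_powersetCard.1 (hZ h1)).2
    rw [mem_singleton] at h2
    rwa [h2]
  · intro h; exact ⟨_, h, by simp⟩

lemma link_point {W : Finset ℕ} {Z : Ch} (hZ : Z ⊆ W.powersetCard 1) {w : ℕ}
    (hw : w ∈ supp Z) : link w Z = {∅} := by
  have h1 := link_sub (v := w) (k := 0) hZ
  rw [powersetCard_zero] at h1
  exact (subset_singleton_iff.1 h1).resolve_left (link_ne_empty hw)

lemma fill_point {W : Finset ℕ} {Z : Ch} (hZ : Z ⊆ W.powersetCard 1) {w v : ℕ}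
    (hv : v ∈ W.erase w) (hw : w ∈ supp Z) : fill (link w Z) {{v}} = {{v}} := by
  rw [link_point hZ hw]
  exact fill_eq (good_point hv).acyc subset_rfl (bd_point v)

lemma supp_nxt_point {W : Finset ℕ} {Z : Ch} (hZ : Z ⊆ W.powersetCard 1) (hb : bd Z = ∅)
    {w v : ℕ} (hv : v ∈ W.erase w) (hw : w ∈ supp Z) (u : ℕ) :
    u ∈ supp (nxt w Z {{v}}) ↔ (u ∈ supp Z ∧ u ≠ w ∧ u ≠ v) ∨ (u = v ∧ v ∉ supp Z) := by
  rw [mem_supp_one (nxt_sub (k := 0) (good_point hv) hZ hb), mem_supp_one hZ, mem_supp_one hZ,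
    nxt, fill_point hZ hv hw, mem_symmDiff, del, mem_filter, mem_singleton, mem_singleton,
    singleton_inj]
  have := ne_of_mem_erase hv
  constructor
  · rintro (⟨⟨h1, h2⟩, h3⟩ | ⟨h1, h2⟩)
    · left; exact ⟨h1, fun h => h2 h.symm, h3⟩
    · subst h1
      right; exact ⟨rfl, fun h => h2 ⟨h, fun h' => this h'.symm⟩⟩
  · rintro (⟨h1, h2, h3⟩ | ⟨h1, h2⟩)
    · left; exact ⟨⟨h1, fun h => h2 h.symm⟩, h3⟩
    · subst h1
      right; exact ⟨rfl, fun h => h2 h.1⟩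

structure Base (n : ℕ) (W : Finset ℕ) (w : ℕ) (E : Fn) : Prop where
  dist : IsDist 1 W E
  prob1 : ∀ x, w ∈ x → (n : ℝ) * E (ind x) ≤ 1
  prob2 : ∀ x, (n : ℝ) * E (ind x) ≤ 2
  vol1 : ∀ Z ⊆ W.powersetCard 1, bd Z = ∅ → w ∈ supp Z → ((n : ℝ) + 1) / 2 ≤ E (vol Z)
  vol2 : ∀ Z ⊆ W.powersetCard 1, bd Z = ∅ → w ∉ supp Z →
    (supp Z).card * ((n : ℝ) + 1) / (2 * ((supp Z).card + 1)) ≤ E (vol Z)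

lemma ind_le_one {k : ℕ} {V : Finset ℕ} {E : Fn} (h : IsDist k V E) (x : Finset ℕ) :
    E (ind x) ≤ 1 :=
  h.ub 1 (ind x) (fun T _ => by simp only [ind]; split_ifs <;> norm_num)

theorem base_thm : ∀ n, ∀ W : Finset ℕ, ∀ w ∈ W, W.card = n + 1 → ∃ E, Base n W w E := by
  intro n
  induction n with
  | zero =>
    intro W w hw hW
    have hg := good_small (V := W) (k := 1) (by omega) (by omega)
    have hd := ev_dist hg
    have hz : ∀ Z ⊆ W.powersetCard 1, bd Z = ∅ → Z = ∅ := by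
      intro Z hZ hb
      obtain ⟨F, h1, h2⟩ := hg.fills Z hZ hb
      rw [subset_empty.1 h1, bd_empty] at h2
      exact h2.symm
    refine ⟨ev ∅, hd, by simp, by simp, ?_, ?_⟩
    · intro Z hZ hb hws
      rw [hz Z hZ hb] at hws
      simp [supp] at hws
    · intro Z hZ hb hws
      have := vol_nonneg hd Z
      rw [hz Z hZ hb] at this ⊢
      simpa [supp] using this
  | succ n ih =>
    intro W w hw hW
    have hW' : (W.erase w).card = n + 1 := by rw [card_erase_of_mem hw, hW]; rfl
    have hB : ∀ v, ∃ E, v ∈ W.erase w → Base n (W.erase w) v E := by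
      intro v
      by_cases hv : v ∈ W.erase w
      · obtain ⟨E, hE⟩ := ih (W.erase w) v hv hW'
        exact ⟨E, fun _ => hE⟩
      · exact ⟨0, fun h => absurd h hv⟩
    choose B hB using hB
    have hne : (W.erase w).Nonempty := card_pos.1 (by omega)
    have hA : ∀ v ∈ W.erase w, IsDist 0 (W.erase w) (ev {{v}}) :=
      fun v hv => ev_dist (good_point hv)
    have hd : IsDist 1 W (mix (W.erase w) (fun v => coneE w (ev {{v}}) (B v))) :=
      mix_dist hne fun v hv => coneE_dist (k := 0) hw (hA v hv) (hB v hv).dist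
    have hN : (0 : ℝ) < (n : ℝ) + 1 := by positivity
    have hma := fun φ => mix_apply hne (fun v => coneE w (ev {{v}}) (B v)) φ
    have hlb : ∀ Z ⊆ W.powersetCard 1, bd Z = ∅ → ∀ v ∈ W.erase w,
        ((fill (link w Z) {{v}}).card : ℝ) + (B v) (vol (nxt w Z {{v}})) ≤
          coneE w (ev {{v}}) (B v) (vol Z) := by
      intro Z hZ hb v hv
      exact cone_lb (k := 0) (hA v hv) (hB v hv).dist hZ hb
        (fun F => (B v) (vol (nxt w Z F))) (fun _ _ => le_rfl)
    have hp1 : ∀ x, w ∈ x → ((n + 1 : ℕ) : ℝ) *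
        mix (W.erase w) (fun v => coneE w (ev {{v}}) (B v)) (ind x) ≤ 1 := by
      intro x hx
      rw [← hW', hma]
      have h1 : ∀ v ∈ W.erase w, coneE w (ev {{v}}) (B v) (ind x) ≤
          if x.erase w = {v} then (1 : ℝ) else 0 := by
        intro v hv
        refine (cone_ind_mem (k := 0) (hA v hv) (hB v hv).dist hx).trans (le_of_eq ?_)
        rw [ev_apply]
        simp [ind]
      refine (sum_le_sum h1).trans ?_
      rw [sum_boole]
      have : ((W.erase w).filter (fun v => x.erase w = {v})).card ≤ 1 := by
        rw [card_le_one]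
        intro a ha b hb
        have h1 := (mem_filter.1 ha).2
        have h2 := (mem_filter.1 hb).2
        exact singleton_inj.1 (h1.symm.trans h2)
      exact_mod_cast this
    refine ⟨_, hd, hp1, ?_, ?_, ?_⟩
    · intro x
      by_cases hx : w ∈ x
      · linarith [hp1 x hx]
      by_cases hx2 : x ∈ W.powersetCard (1 + 1)
      · obtain ⟨hx3, hx4⟩ := mem_powersetCard.1 hx2
        have hx5 : x ⊆ W.erase w := fun u hu =>
          mem_erase.2 ⟨fun h => hx (h ▸ hu), hx3 hu⟩
        have hn1 : 1 ≤ n := by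
          have := card_le_card hx5
          omega
        have hn' : (0 : ℝ) < n := by exact_mod_cast hn1
        rw [← hW', hma]
        have h1 : ∀ v ∈ W.erase w, coneE w (ev {{v}}) (B v) (ind x) ≤
            2 / n - (if v ∈ x then (1 : ℝ) else 0) / n := by
          intro v hv
          refine (cone_ind_notMem (k := 0) (hA v hv) (hB v hv).dist hx).trans ?_
          rw [← sub_div, le_div_iff₀ hn']
          split_ifs with h
          · linarith [(hB v hv).prob1 x h]
          · linarith [(hB v hv).prob2 x]
        refine (sum_le_sum h1).trans (le_of_eq ?_)
        rw [sum_sub_distrib, ← sum_div, ← sum_div, sum_ite_mem, inter_eq_right.2 hx5]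
        simp only [sum_const, hW', hx4, nsmul_eq_mul]
        push_cast
        field_simp
        ring
      · have := ind_nonpos hd hx2
        have : ((n + 1 : ℕ) : ℝ) *
          mix (W.erase w) (fun v => coneE w (ev {{v}}) (B v)) (ind x) ≤ 0 :=
          mul_nonpos_of_nonneg_of_nonpos (by positivity) this
        linarith
    · intro Z hZ hb hws
      refine le_of_mul_le_mul_left ?_ (show (0 : ℝ) < (W.erase w).card by
        exact_mod_cast hne.card_pos)
      rw [hma]
      set a : ℝ := ((((supp Z).erase w).card : ℕ) : ℝ) with ha
      have h1 : ∀ v ∈ W.erase w, (1 + ((n : ℝ) + 1) / 2) -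
          (if v ∈ (supp Z).erase w then (1 : ℝ) else 0) * (((n : ℝ) + 1) / (2 * a)) ≤
          coneE w (ev {{v}}) (B v) (vol Z) := by
        intro v hv
        refine le_trans ?_ (hlb Z hZ hb v hv)
        rw [fill_point hZ hv hws, card_singleton, Nat.cast_one, add_sub_assoc]
        apply add_le_add_right
        have hsub := nxt_sub (k := 0) (good_point hv) hZ hb
        have hbd := nxt_bd (k := 0) (good_point hv) hZ hb
        have hvw := ne_of_mem_erase hv
        by_cases hvs : v ∈ supp Z
        · have hv2 : v ∈ (supp Z).erase w := mem_erase.2 ⟨hvw, hvs⟩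
          rw [if_pos hv2]
          have h2 := (hB v hv).vol2 _ hsub hbd (by
            rw [supp_nxt_point hZ hb hv hws]; tauto)
          have h3 : supp (nxt w Z {{v}}) = ((supp Z).erase w).erase v := by
            ext u
            rw [supp_nxt_point hZ hb hv hws, mem_erase, mem_erase]
            tauto
          have h4 : ((supp (nxt w Z {{v}})).card : ℝ) = a - 1 := by
            rw [h3, erase_card_ind, if_pos hv2]
          have ha0 : 0 < a := by
            rw [ha]; exact_mod_cast card_pos.2 ⟨v, hv2⟩
          rw [h4, sub_add_cancel] at h2
          refine le_trans (le_of_eq ?_) h2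
          field_simp
        · rw [if_neg (fun h => hvs (mem_of_mem_erase h))]
          have h2 := (hB v hv).vol1 _ hsub hbd (by
            rw [supp_nxt_point hZ hb hv hws]; tauto)
          linarith
      refine le_trans ?_ (sum_le_sum h1)
      have hsub : (supp Z).erase w ⊆ W.erase w := erase_subset_erase _ (supp_sub hZ)
      rw [sum_sub_distrib, ← sum_mul, sum_ite_mem, inter_eq_right.2 hsub]
      simp only [sum_const, hW', nsmul_eq_mul, mul_one]
      rw [← ha]
      have h2 : a * (((n : ℝ) + 1) / (2 * a)) ≤ ((n : ℝ) + 1) / 2 := by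
        by_cases h0 : a = 0
        · rw [h0]; simp; positivity
        · apply le_of_eq; field_simp
      push_cast
      nlinarith
    · intro Z hZ hb hws
      refine le_of_mul_le_mul_left ?_ (show (0 : ℝ) < (W.erase w).card by
        exact_mod_cast hne.card_pos)
      rw [hma]
      set r : ℝ := (((supp Z).card : ℕ) : ℝ) with hr
      have hr0 : 0 ≤ r := by positivity
      have h1 : ∀ v ∈ W.erase w, r * ((n : ℝ) + 1) / (2 * (r + 1)) +
          (if v ∈ supp Z then (1 : ℝ) else 0) * (((n : ℝ) + 1) / (2 * (r + 1))) ≤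
          coneE w (ev {{v}}) (B v) (vol Z) := by
        intro v hv
        have e := nxt_of_notMem (good_point hv).acyc hws
        have hsub := nxt_sub (k := 0) (good_point hv) hZ hb
        have h2 := hlb Z hZ hb v hv
        rw [e] at hsub h2
        have h3 : (0 : ℝ) ≤ ((fill (link w Z) {{v}}).card : ℝ) := by positivity
        split_ifs with hvs
        · have := (hB v hv).vol1 _ hsub hb hvs
          have h5 : r * ((n : ℝ) + 1) / (2 * (r + 1)) + 1 * (((n : ℝ) + 1) / (2 * (r + 1)))
            = ((n : ℝ) + 1) / 2 := by field_simp
          linarith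
        · have := (hB v hv).vol2 _ hsub hb hvs
          linarith
      refine le_trans ?_ (sum_le_sum h1)
      have hsub : supp Z ⊆ W.erase w := fun u hu =>
        mem_erase.2 ⟨fun h => hws (h ▸ hu), supp_sub hZ hu⟩
      rw [sum_add_distrib, ← sum_mul, sum_ite_mem, inter_eq_right.2 hsub]
      simp only [sum_const, hW', nsmul_eq_mul, mul_one]
      rw [← hr]
      push_cast
      apply le_of_eq
      field_simp

theorem base_ok (V : Finset ℕ) : ∃ E, OK 1 (1 / 3) V E := by
  rcases V.eq_empty_or_nonempty with rfl | hne
  · have hd := ev_dist (good_small (V := ∅) (k := 1) (by simp) (by omega))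
    refine ⟨ev ∅, hd, ?_, ?_⟩
    · intro x; simp
    · intro Z _ _ _
      simpa using vol_nonneg hd Z
  · have hp := hne.card_pos
    have h : ∀ w, ∃ E, w ∈ V → Base (V.card - 1) V w E := by
      intro w
      by_cases hw : w ∈ V
      · obtain ⟨E, hE⟩ := base_thm (V.card - 1) V w hw (by omega)
        exact ⟨E, fun _ => hE⟩
      · exact ⟨0, fun h => absurd h hw⟩
    choose f hf using h
    have hd : IsDist 1 V (mix V f) := mix_dist hne fun v hv => (hf v hv).dist
    have hm : ((V.card - 1 : ℕ) : ℝ) = V.card - 1 := by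
      rw [Nat.cast_sub hp]; simp
    have hp' : (1 : ℝ) ≤ V.card := by exact_mod_cast hp
    refine ⟨mix V f, hd, ?_, ?_⟩
    · intro x
      rw [mix_apply hne]
      by_cases hx : x ∈ V.powersetCard (1 + 1)
      · obtain ⟨hx3, hx4⟩ := mem_powersetCard.1 hx
        have h2 : (2 : ℝ) ≤ V.card := by
          have := card_le_card hx3
          rw [hx4] at this
          exact_mod_cast this
        have hn' : (0 : ℝ) < (V.card : ℝ) - 1 := by linarith
        have h1 : ∀ v ∈ V, f v (ind x) ≤
            2 / ((V.card : ℝ) - 1) - (if v ∈ x then (1 : ℝ) else 0) / ((V.card : ℝ) - 1) := by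
          intro v hv
          rw [← sub_div, le_div_iff₀ hn', ← hm]
          split_ifs with h
          · linarith [(hf v hv).prob1 x h]
          · linarith [(hf v hv).prob2 x]
        refine (sum_le_sum h1).trans (le_of_eq ?_)
        rw [sum_sub_distrib, ← sum_div, ← sum_div, sum_ite_mem, inter_eq_right.2 hx3]
        simp only [sum_const, hx4, nsmul_eq_mul]
        push_cast
        field_simp
        ring
      · refine (sum_nonpos fun v hv => ind_nonpos (hf v hv).dist hx).trans (by norm_num)
    · intro Z hZ hb hZne
      refine le_of_mul_le_mul_left ?_ (show (0 : ℝ) < V.card by linarith)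
      rw [mix_apply hne, ← nsmul_eq_mul]
      apply card_nsmul_le_sum
      intro v hv
      rw [Nat.choose_one_right, hm]
      by_cases hvs : v ∈ supp Z
      · have := (hf v hv).vol1 Z hZ hb hvs
        rw [hm] at this
        linarith
      · have := (hf v hv).vol2 Z hZ hb hvs
        have hr : (1 : ℝ) ≤ (supp Z).card := by exact_mod_cast supp_ge hZ hZne
        have hr2 : (2 : ℝ) ≤ (supp Z).card := by
          by_contra hcon
          push Not at hcon
          have h1 : (supp Z).card = 1 := by
            have h2 : (supp Z).card < 2 := by exact_mod_cast hcon
            have h3 := supp_ge hZ hZne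
            omega
          obtain ⟨u, hu⟩ := card_eq_one.1 h1
          have hZu : Z ⊆ ({u} : Finset ℕ).powersetCard 1 := by
            intro σ hσ
            refine mem_powersetCard.2 ⟨?_, (mem_powersetCard.1 (hZ hσ)).2⟩
            rw [← hu]
            exact fun y hy => mem_supp.2 ⟨σ, hσ, hy⟩
          have hg := good_small (V := {u}) (k := 1) (by simp) (by omega)
          obtain ⟨F, h1, h2⟩ := hg.fills Z hZu hb
          rw [subset_empty.1 h1, bd_empty] at h2
          exact hZne h2.symm
        rw [hm, sub_add_cancel] at this
        refine le_trans ?_ this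
        rw [le_div_iff₀ (by positivity)]
        nlinarith

lemma lt_three_pow (D : ℕ) : D + 1 ≤ 3 ^ D := by
  induction D with
  | zero => simp
  | succ D ih => rw [pow_succ]; omega

theorem all_ok (D : ℕ) : ∀ V, ∃ E, OK (D + 1) (16 * ((48 : ℝ) ^ (3 ^ D))⁻¹) V E := by
  induction D with
  | zero =>
    intro V
    have := base_ok V
    norm_num at this ⊢
    exact this
  | succ D ih =>
    intro V
    set q : ℝ := ((48 : ℝ) ^ (3 ^ D))⁻¹ with hq
    have hq0 : 0 < q := by positivity
    have e : ((48 : ℝ) ^ (3 ^ (D + 1)))⁻¹ = q ^ 3 := by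
      rw [hq, inv_pow, ← pow_mul, pow_succ]
    rw [e]
    have h1 : q * 48 ^ (D + 1) ≤ 1 := by
      rw [hq, inv_mul_le_iff₀ (by positivity), mul_one]
      exact pow_le_pow_right₀ (by norm_num) (lt_three_pow D)
    have h48 : (48 : ℝ) ≤ 48 ^ (D + 1) := by
      rw [pow_succ]
      have : (1 : ℝ) ≤ 48 ^ D := one_le_pow₀ (by norm_num)
      linarith
    have hq48 : q * 48 ≤ 1 := by nlinarith
    have hD : ((D : ℝ) + 1) ≤ 48 ^ (D + 1) := by
      have h2 : D + 1 ≤ 48 ^ (D + 1) := (Nat.lt_pow_self (by norm_num)).le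
      exact_mod_cast h2
    have hqD : q * (D + 1) ≤ 1 := by nlinarith
    have h4 : (2 : ℝ) ^ (2 * (D + 1) + 1) ≤ 2 * 48 ^ (D + 1) := by
      rw [pow_succ, pow_mul, mul_comm]
      have : ((2 : ℝ) ^ 2) ^ (D + 1) ≤ 48 ^ (D + 1) :=
        pow_le_pow_left₀ (by norm_num) (by norm_num) _
      linarith
    obtain ⟨E, hE, _⟩ := step_thm (k := D + 1) (b := 16 * q ^ 3) (c := 16 * q) (by omega)
      (by positivity) (by linarith) (by positivity) (by
        rw [le_div_iff₀ (by positivity)]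
        push_cast
        nlinarith [mul_le_mul_of_nonneg_left hqD (show 0 ≤ 256 * q ^ 2 by positivity)]) (by
        calc 16 * q ^ 3 * 2 ^ (2 * (D + 1) + 1) ≤ 16 * q ^ 3 * (2 * 48 ^ (D + 1)) :=
              mul_le_mul_of_nonneg_left h4 (by positivity)
          _ = 32 * q ^ 2 * (q * 48 ^ (D + 1)) := by ring
          _ ≤ 32 * q ^ 2 * 1 := mul_le_mul_of_nonneg_left h1 (by positivity)
          _ ≤ 1 := by nlinarith) ih V.card V rfl
    exact ⟨E, hE⟩

lemma bd_single_ne {σ : Finset ℕ} (h : 1 ≤ σ.card) : bd {σ} ≠ ∅ := by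
  obtain ⟨u, hu⟩ := card_pos.1 h
  apply nonempty_iff_ne_empty.1
  refine ⟨σ.erase u, (bd_single _ _).2 ⟨erase_subset _ _, ?_⟩⟩
  rw [card_erase_of_mem hu]; omega

lemma exists_ge {k : ℕ} {V : Finset ℕ} {E : Fn} (h : IsDist k V E) (φ : Ch → ℝ) :
    ∃ T, Good k V T ∧ E φ ≤ φ T := by
  classical
  set S := (V.powersetCard (k + 1)).powerset.filter (fun T => Good k V T) with hS
  have hmem : ∀ T, Good k V T → T ∈ S := fun T hT =>
    mem_filter.2 ⟨mem_powerset.2 hT.sub, hT⟩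
  have hne : S.Nonempty := by
    by_contra hcon
    have h0 : ∀ T, ¬ Good k V T := fun T hT => hcon ⟨T, hmem T hT⟩
    have := h.ub 0 (fun _ => 1) (fun T hT => absurd hT (h0 T))
    rw [h.one] at this
    linarith
  obtain ⟨T, hT, hmax⟩ := S.exists_max_image φ hne
  exact ⟨T, (mem_filter.1 hT).2, h.ub _ _ fun T' hT' => hmax T' (hmem T' hT')⟩

/-- For every `d ≥ 1` and `n ≥ d+1`, there is a `d`-hypertree `T` on `[n]` with average
filling-volume `μ(T) ≥ c_d·C(n-1,d)`, where `c_d = 16·48^{-3^{d-1}}`. -/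
theorem exists_hypertree_large_avg_fill (d n : ℕ) (hd : 1 ≤ d) (hn : d + 1 ≤ n) :
    ∃ T, IsHypertreeOn (rng n) d T ∧
      (16 : ℝ) * (48 : ℝ) ^ (-(3 ^ (d - 1) : ℤ)) * ((n - 1).choose d : ℝ) ≤
        fillVolAvg n d T := by
  obtain ⟨D, rfl⟩ : ∃ D, d = D + 1 := ⟨d - 1, by omega⟩
  obtain ⟨E, hE⟩ := all_ok D (rng n)
  obtain ⟨T, hT, hle⟩ := exists_ge hE.dist
    (fun T => ∑ σ ∈ simplices (rng n) (D + 1), vol (bd {σ}) T)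
  refine ⟨T, good_hypertree hT, ?_⟩
  have hcard : (rng n).card = n := by simp [rng]
  have hs : simplices (rng n) (D + 1) = (rng n).powersetCard (D + 1 + 1) := by
    rw [simplices, powersetCard_eq_filter]
  have hscard : (simplices (rng n) (D + 1)).card = n.choose (D + 1 + 1) := by
    rw [hs, card_powersetCard, hcard]
  have hpos : (0 : ℝ) < n.choose (D + 1 + 1) := by
    exact_mod_cast Nat.choose_pos hn
  have hc : (48 : ℝ) ^ (-(3 ^ (D + 1 - 1) : ℤ)) = ((48 : ℝ) ^ (3 ^ D))⁻¹ := by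
    rw [zpow_neg, Nat.add_sub_cancel]
    congr 1
  rw [hc, fillVolAvg, le_div_iff₀ hpos]
  refine le_trans ?_ hle
  rw [Fn.sum, mul_comm, ← hscard, ← nsmul_eq_mul]
  apply card_nsmul_le_sum
  intro σ hσ
  rw [hs, mem_powersetCard] at hσ
  have hv := hE.vol (bd {σ}) (by
    intro τ hτ
    rw [bd_single] at hτ
    rw [mem_powersetCard]
    exact ⟨hτ.1.trans hσ.1, by omega⟩) (bd_bd_single σ) (bd_single_ne (by omega))
  rwa [hcard] at hv
end

section
/- For any two positive integers d and n, with α = 1 − 1/d and m = ⌈αn⌉, one has C(m,d) ≥ α^d·C(n-1,d) and C(m-1,d-1) ≥ α^{d-1}·C(n-2,d-1). -/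
open Finset symmDiff

lemma pow_mul_choose_le (α : ℝ) (hα : 0 ≤ α) (a b k : ℕ)
    (h : ∀ i < k, α * ((b : ℝ) - i) ≤ (a : ℝ) - i) :
    α ^ k * (b.choose k : ℝ) ≤ (a.choose k : ℝ) := by
  have key : α ^ k * (b.descFactorial k : ℝ) ≤ (a.descFactorial k : ℝ) := by
    induction k with
    | zero => simp
    | succ k ih =>
      have ih' := ih (fun i hi => h i (by omega))
      have hk := h k (by omega)
      have step : α * ((b - k : ℕ) : ℝ) ≤ ((a - k : ℕ) : ℝ) := by
        have h1 : (a : ℝ) - k ≤ ((a - k : ℕ) : ℝ) := by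
          rw [sub_le_iff_le_add]
          exact_mod_cast (by omega : a ≤ a - k + k)
        rcases le_total b k with hb | hb
        · rw [Nat.sub_eq_zero_of_le hb]
          simp
        · rw [Nat.cast_sub hb]
          linarith
      rw [Nat.descFactorial_succ, Nat.descFactorial_succ]
      push_cast
      calc α ^ (k + 1) * (((b - k : ℕ) : ℝ) * (b.descFactorial k : ℝ))
          = (α * ((b - k : ℕ) : ℝ)) * (α ^ k * (b.descFactorial k : ℝ)) := by ring
        _ ≤ _ := mul_le_mul step ih' (by positivity) (by positivity)
  rw [Nat.descFactorial_eq_factorial_mul_choose, Nat.descFactorial_eq_factorial_mul_choose] at key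
  push_cast at key
  have hf : (0 : ℝ) < (k.factorial : ℝ) := by exact_mod_cast k.factorial_pos
  refine le_of_mul_le_mul_left ?_ hf
  linarith

/-- For positive integers `d`, `n`, with `α = 1 − 1/d` and `m = ⌈αn⌉`, one has
`C(m,d) ≥ α^d·C(n-1,d)` and `C(m-1,d-1) ≥ α^{d-1}·C(n-2,d-1)`. -/
theorem binomial_ceil_bounds (d n : ℕ) (hd : 0 < d) (hn : 0 < n) :
    (1 - 1 / (d : ℝ)) ^ d * ((n - 1).choose d : ℝ) ≤
        ((⌈(1 - 1 / (d : ℝ)) * n⌉₊).choose d : ℝ) ∧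
      (1 - 1 / (d : ℝ)) ^ (d - 1) * ((n - 2).choose (d - 1) : ℝ) ≤
        (((⌈(1 - 1 / (d : ℝ)) * n⌉₊ - 1).choose (d - 1)) : ℝ) := by
  have hd' : (1 : ℝ) ≤ d := by exact_mod_cast hd
  have hd0 : (0 : ℝ) < d := by linarith
  have hc : (1 / (d : ℝ)) * d = 1 := by field_simp
  have hpos : 0 < 1 / (d : ℝ) := by positivity
  generalize 1 / (d : ℝ) = c at *
  have hα : 0 ≤ 1 - c := by nlinarith
  have hm : (1 - c) * n ≤ (⌈(1 - c) * (n : ℝ)⌉₊ : ℝ) := Nat.le_ceil _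
  generalize ⌈(1 - c) * (n : ℝ)⌉₊ = m at *
  constructor
  · apply pow_mul_choose_le _ hα
    intro i hi
    have hi' : (i : ℝ) + 1 ≤ d := by exact_mod_cast hi
    rw [Nat.cast_sub hn]
    push_cast
    have := mul_le_mul_of_nonneg_left hi' hpos.le
    nlinarith
  · rcases Nat.lt_or_ge n 2 with h2 | h2
    · rcases Nat.lt_or_ge d 2 with h3 | h3
      · obtain rfl : d = 1 := by omega
        simp
      · rw [show n - 2 = 0 by omega, Nat.choose_eq_zero_of_lt (by omega)]
        simp
    · apply pow_mul_choose_le _ hα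
      intro i hi
      have hi' : (i : ℝ) + 2 ≤ d := by exact_mod_cast (by omega : i + 2 ≤ d)
      have h1 : (m : ℝ) - 1 ≤ ((m - 1 : ℕ) : ℝ) := by
        rw [sub_le_iff_le_add]
        exact_mod_cast (by omega : m ≤ m - 1 + 1)
      rw [Nat.cast_sub h2]
      push_cast
      have := mul_le_mul_of_nonneg_left hi' hpos.le
      nlinarith
end

section
/- Let v ∉ [n], let X be a set of d-simplices on [n] and Y a set of (d-1)-simplices on [n], and set Ext_v(X,Y) = X ⊕ Cone_v(Y). If X and Y are both acyclic over F_2, then Ext_v(X,Y) is acyclic; and if X and Y are both collapsible, then Ext_v(X,Y) is collapsible. -/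
open Finset symmDiff

theorem mem_bd_iff_aux (X : Finset (Finset ℕ)) (τ : Finset ℕ) :
    τ ∈ bd X ↔ Odd (X.filter fun σ => τ ⊆ σ ∧ τ.card + 1 = σ.card).card := by
  unfold bd
  rw [Finset.mem_filter]
  refine ⟨fun h => h.2, fun h => ⟨?_, h⟩⟩
  obtain ⟨σ, hσ⟩ := Finset.card_pos.mp h.pos
  rw [Finset.mem_filter] at hσ
  exact Finset.mem_biUnion.mpr ⟨σ, hσ.1, Finset.mem_powerset.mpr hσ.2.1⟩

theorem insert_inj_aux {v : ℕ} {a b : Finset ℕ} (ha : v ∉ a) (hb : v ∉ b)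
    (h : insert v a = insert v b) : a = b := by
  rw [← Finset.erase_insert ha, h, Finset.erase_insert hb]

theorem acyclic_aux (v : ℕ) (X Y : Finset (Finset ℕ)) (hX : ∀ σ ∈ X, v ∉ σ)
    (hY : ∀ σ ∈ Y, v ∉ σ) (aX : IsAcyclic X) (aY : IsAcyclic Y) :
    IsAcyclic (X ∪ cone v Y) := by
  intro Z hZ hne hbd
  by_cases hc : ∃ σ ∈ Z, v ∈ σ
  · have key : ∀ σ ∈ Z, v ∈ σ → ∃ y ∈ Y, insert v y = σ := by
      intro σ hσ hvσ
      rcases Finset.mem_union.mp (hZ hσ) with h | h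
      · exact absurd hvσ (hX σ h)
      · exact Finset.mem_image.mp h
    obtain ⟨σ₀, hσ₀, hv₀⟩ := hc
    obtain ⟨y₀, hy₀, rfl⟩ := key σ₀ hσ₀ hv₀
    have hW : Y.filter (fun y => insert v y ∈ Z) ≠ ∅ :=
      Finset.ne_empty_of_mem (Finset.mem_filter.mpr ⟨hy₀, hσ₀⟩)
    have hb := aY _ (Finset.filter_subset _ _) hW
    obtain ⟨τ, hτ⟩ := Finset.nonempty_iff_ne_empty.mpr hb
    rw [mem_bd_iff_aux] at hτ
    have hvτ : v ∉ τ := by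
      obtain ⟨σ, hσ⟩ := Finset.card_pos.mp hτ.pos
      simp only [Finset.mem_filter] at hσ
      exact fun h => hY σ hσ.1.1 (hσ.2.1 h)
    have hmem : insert v τ ∈ bd Z := by
      rw [mem_bd_iff_aux]
      convert hτ using 1
      symm
      apply Finset.card_bij (fun y _ => insert v y)
      · intro y hy
        simp only [Finset.mem_filter] at hy ⊢
        refine ⟨hy.1.2, Finset.insert_subset_insert _ hy.2.1, ?_⟩
        rw [Finset.card_insert_of_notMem hvτ, Finset.card_insert_of_notMem (hY y hy.1.1), hy.2.2]
      · intro a ha b hb h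
        simp only [Finset.mem_filter] at ha hb
        exact insert_inj_aux (hY a ha.1.1) (hY b hb.1.1) h
      · intro σ hσ
        simp only [Finset.mem_filter] at hσ
        obtain ⟨hσZ, hsub, hcard⟩ := hσ
        obtain ⟨y, hy, rfl⟩ := key σ hσZ (hsub (Finset.mem_insert_self _ _))
        rw [Finset.card_insert_of_notMem hvτ, Finset.card_insert_of_notMem (hY y hy)] at hcard
        refine ⟨y, ?_, rfl⟩
        simp only [Finset.mem_filter]
        exact ⟨⟨hy, hσZ⟩, (Finset.insert_subset_insert_iff hvτ).mp hsub, by omega⟩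
    rw [hbd] at hmem
    exact absurd hmem (Finset.notMem_empty _)
  · refine aX Z (fun σ hσ => ?_) hne hbd
    rcases Finset.mem_union.mp (hZ hσ) with h | h
    · exact h
    · obtain ⟨y, _, rfl⟩ := Finset.mem_image.mp h
      exact absurd ⟨_, hσ, Finset.mem_insert_self _ _⟩ hc

theorem collapsible_aux (v : ℕ) (X Y : Finset (Finset ℕ)) (hX : ∀ σ ∈ X, v ∉ σ)
    (cX : Collapsible X) (cY : Collapsible Y) (hY : ∀ σ ∈ Y, v ∉ σ) :
    Collapsible (X ∪ cone v Y) := by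
  induction cY with
  | empty => simpa [cone] using cX
  | step Y σ τ hσ hτ hcard huniq h ih =>
    have hvσ := hY σ hσ
    have hvτ : v ∉ τ := fun h => hvσ (hτ h)
    have ih' := ih (fun s hs => hY s (Finset.mem_of_mem_erase hs))
    refine Collapsible.step _ (insert v σ) (insert v τ)
      (Finset.mem_union_right _ (Finset.mem_image_of_mem _ hσ))
      (Finset.insert_subset_insert _ hτ) ?_ ?_ ?_
    · rw [Finset.card_insert_of_notMem hvτ, Finset.card_insert_of_notMem hvσ, hcard]
    · intro σ' hσ' hsub
      rcases Finset.mem_union.mp hσ' with h | h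
      · exact absurd (hsub (Finset.mem_insert_self _ _)) (hX σ' h)
      · obtain ⟨y, hy, rfl⟩ := Finset.mem_image.mp h
        rw [huniq y hy ((Finset.insert_subset_insert_iff hvτ).mp hsub)]
    · convert ih' using 1
      ext s
      simp only [cone, Finset.mem_erase, Finset.mem_union, Finset.mem_image]
      constructor
      · rintro ⟨hne, h | ⟨y, hy, rfl⟩⟩
        · exact Or.inl h
        · exact Or.inr ⟨y, ⟨fun e => hne (by rw [e]), hy⟩, rfl⟩
      · rintro (h | ⟨y, ⟨hne, hy⟩, rfl⟩)
        · exact ⟨fun e => hX s h (e ▸ Finset.mem_insert_self _ _), Or.inl h⟩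
        · exact ⟨fun e => hne (insert_inj_aux (hY y hy) hvσ e), Or.inr ⟨y, hy, rfl⟩⟩

/-- For `v ∉ [n]`, a set `X` of `d`-simplices and a set `Y` of `(d-1)`-simplices on `[n]`:
if `X` and `Y` are both acyclic over `F_2` then so is `Ext_v(X,Y) = X ⊕ Cone_v(Y)`, and
if `X` and `Y` are both collapsible then so is `Ext_v(X,Y)`. -/
theorem conical_extension_acyclic_collapsible (n d : ℕ) (hd : 1 ≤ d) (v : ℕ)
    (hv : v ∉ rng n) (X Y : Finset (Finset ℕ))
    (hX : X ⊆ simplices (rng n) d) (hY : Y ⊆ simplices (rng n) (d - 1)) :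
    (IsAcyclic X → IsAcyclic Y → IsAcyclic (X ∆ cone v Y)) ∧
      (Collapsible X → Collapsible Y → Collapsible (X ∆ cone v Y)) := by
  have hs : ∀ (k : ℕ) (Z : Finset (Finset ℕ)), Z ⊆ simplices (rng n) k → ∀ σ ∈ Z, v ∉ σ := by
    intro k Z hZ σ hσ hvσ
    have h := hZ hσ
    unfold simplices at h
    rw [Finset.mem_filter, Finset.mem_powerset] at h
    exact hv (h.1 hvσ)
  have hX' := hs _ X hX
  have hY' := hs _ Y hY
  have hdis : Disjoint X (cone v Y) := by
    rw [Finset.disjoint_left]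
    intro σ hσ hc
    obtain ⟨y, _, rfl⟩ := Finset.mem_image.mp hc
    exact hX' _ hσ (Finset.mem_insert_self _ _)
  have he : X ∆ cone v Y = X ∪ cone v Y := hdis.symmDiff_eq_sup
  rw [he]
  exact ⟨acyclic_aux v X Y hX' hY', fun cX cY => collapsible_aux v X Y hX' cX cY hY'⟩
end

section
/- Let n ≥ 2 and let Z ⊆ [n] be a nonempty set of even cardinality. Then there exist at least n − 2 distinct spanning trees T of the complete graph on the vertex set [n] such that the set of vertices of odd degree in T is exactly Z. -/
open Finset symmDiff

/-- Membership in the boundary of a set of edges. -/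
lemma mem_bd_edges {V : Finset ℕ} {Y : Finset (Finset ℕ)} (hY : Y ⊆ simplices V 1)
    (τ : Finset ℕ) :
    τ ∈ bd Y ↔ ∃ x, τ = {x} ∧ Odd (Y.filter fun σ => x ∈ σ).card := by
  have h2 : ∀ σ ∈ Y, σ.card = 2 := by
    intro σ hσ
    have := hY hσ
    simp only [simplices, mem_filter] at this
    exact this.2
  have key : ∀ x, (Y.filter fun σ => ({x} : Finset ℕ) ⊆ σ ∧ ({x} : Finset ℕ).card + 1 = σ.card)
      = Y.filter fun σ => x ∈ σ := by
    intro x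
    apply Finset.filter_congr
    intro σ hσ
    simp [h2 σ hσ]
  unfold bd
  simp only [mem_filter]
  constructor
  · rintro ⟨-, ho⟩
    obtain ⟨σ, hσ⟩ := Finset.card_pos.1 ho.pos
    simp only [mem_filter] at hσ
    have h1 : τ.card = 1 := by
      have := h2 σ hσ.1
      omega
    obtain ⟨x, rfl⟩ := Finset.card_eq_one.1 h1
    rw [key] at ho
    exact ⟨x, rfl, ho⟩
  · rintro ⟨x, rfl, ho⟩
    rw [key]
    refine ⟨?_, ho⟩
    obtain ⟨σ, hσ⟩ := Finset.card_pos.1 ho.pos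
    simp only [mem_filter] at hσ
    simp only [mem_biUnion, mem_powerset]
    exact ⟨σ, hσ.1, by simpa using hσ.2⟩

/-- `T` is a spanning tree on `V` with odd-degree set `Z`. -/
def GoodTree (V Z : Finset ℕ) (T : Finset (Finset ℕ)) : Prop :=
  T ⊆ simplices V 1 ∧ IsAcyclic T ∧ T.card + 1 = V.card ∧
    ∀ x, Odd (T.filter fun σ => x ∈ σ).card ↔ x ∈ Z

/-- The odd-degree set after removing the leaf `v` attached to `u`. -/
def stepSet (Z : Finset ℕ) (v u : ℕ) : Finset ℕ :=
  if u ∈ Z then (Z.erase v).erase u else insert u (Z.erase v)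

lemma GoodTree.not_mem {V Z : Finset ℕ} {T : Finset (Finset ℕ)} (h : GoodTree V Z T)
    {v : ℕ} (hv : v ∉ V) : ∀ σ ∈ T, v ∉ σ := by
  intro σ hσ hvσ
  have := h.1 hσ
  simp only [simplices, mem_filter, mem_powerset] at this
  exact hv (this.1 hvσ)

lemma GoodTree.extend {V Z : Finset ℕ} {T : Finset (Finset ℕ)} {v u : ℕ}
    (hv : v ∈ V) (hvZ : v ∈ Z) (hu : u ∈ V) (huv : u ≠ v)
    (h : GoodTree (V.erase v) (stepSet Z v u) T) :
    GoodTree V Z (insert {v, u} T) := by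
  have hvT := h.not_mem (v := v) (by simp)
  have heT : ({v, u} : Finset ℕ) ∉ T := fun h' => hvT _ h' (by simp)
  obtain ⟨h1, h2, h3, h4⟩ := h
  have hsub : insert {v, u} T ⊆ simplices V 1 := by
    intro σ hσ
    rcases Finset.mem_insert.1 hσ with rfl | hσ
    · simp only [simplices, mem_filter, mem_powerset]
      refine ⟨?_, Finset.card_pair huv.symm⟩
      intro x hx
      simp only [mem_insert, mem_singleton] at hx
      rcases hx with rfl | rfl <;> assumption
    · have := h1 hσ
      simp only [simplices, mem_filter, mem_powerset] at this ⊢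
      exact ⟨this.1.trans (Finset.erase_subset _ _), this.2⟩
  refine ⟨hsub, ?_, ?_, ?_⟩
  · intro Y hY hne
    by_cases he : ({v, u} : Finset ℕ) ∈ Y
    · apply Finset.Nonempty.ne_empty
      refine ⟨{v}, (mem_bd_edges (hY.trans hsub) _).2 ⟨v, rfl, ?_⟩⟩
      have : (Y.filter fun σ => v ∈ σ) = {{v, u}} := by
        ext σ
        simp only [mem_filter, mem_singleton]
        constructor
        · rintro ⟨a, b⟩
          rcases Finset.mem_insert.1 (hY a) with h | h
          · exact h
          · exact absurd b (hvT _ h)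
        · rintro rfl
          exact ⟨he, by simp⟩
      rw [this]
      simp
    · exact h2 Y ((Finset.subset_insert_iff_of_notMem he).1 hY) hne
  · rw [Finset.card_insert_of_notMem heT, h3, Finset.card_erase_of_mem hv]
    have := Finset.card_pos.2 ⟨v, hv⟩
    omega
  · intro x
    rw [Finset.filter_insert]
    by_cases hxv : x = v
    · subst hxv
      have : (T.filter fun σ => x ∈ σ) = ∅ := by
        apply Finset.filter_eq_empty_iff.2
        intro σ hσ
        exact hvT σ hσ
      simp [this, hvZ]
    · by_cases hxu : x = u
      · subst hxu
        rw [if_pos (by simp), Finset.card_insert_of_notMem (by simp [heT]), Nat.odd_add_one, h4]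
        unfold stepSet
        split_ifs with hz <;> simp [hz]
      · rw [if_neg (by simp [hxv, hxu]), h4]
        unfold stepSet
        split_ifs with hz <;> simp [hxv, hxu]

lemma stepSet_subset {V Z : Finset ℕ} {v u : ℕ} (hZ : Z ⊆ V) (hu : u ∈ V) (huv : u ≠ v) :
    stepSet Z v u ⊆ V.erase v := by
  intro x hx
  unfold stepSet at hx
  split_ifs at hx with h <;> simp only [mem_erase, mem_insert] at hx ⊢
  · exact ⟨hx.2.1, hZ hx.2.2⟩
  · rcases hx with rfl | hx
    · exact ⟨huv, hu⟩
    · exact ⟨hx.1, hZ hx.2⟩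

lemma stepSet_even {Z : Finset ℕ} {v u : ℕ} (hv : v ∈ Z) (huv : u ≠ v) (hZ : Even Z.card) :
    Even (stepSet Z v u).card := by
  have h0 := Finset.card_erase_add_one hv
  unfold stepSet
  split_ifs with h
  · have h1 := Finset.card_erase_add_one (s := Z.erase v) (a := u) (by simp [h, huv])
    rw [← h0, ← h1] at hZ
    simpa [Nat.even_add_one] using hZ
  · rw [Finset.card_insert_of_notMem (by simp [h]), h0]
    exact hZ

lemma mem_stepSet {Z : Finset ℕ} {v u w : ℕ} (hw : w ∈ Z) (hwv : w ≠ v) (hwu : w ≠ u) :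
    w ∈ stepSet Z v u := by
  unfold stepSet
  split_ifs <;> simp [*]

lemma exists_second {Z : Finset ℕ} {v : ℕ} (hv : v ∈ Z) (hZ : Even Z.card) :
    ∃ w ∈ Z, w ≠ v := by
  have : 1 < Z.card := by
    have := Finset.card_pos.2 ⟨v, hv⟩
    obtain ⟨r, hr⟩ := hZ
    omega
  exact Finset.exists_mem_ne this v

lemma exists_goodTree (k : ℕ) : ∀ V Z : Finset ℕ, V.card = k + 1 → Z ⊆ V → Even Z.card →
    (Z = ∅ → k = 0) → ∃ T, GoodTree V Z T := by
  induction k with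
  | zero =>
    intro V Z hV hZ he _
    have hZ0 : Z = ∅ := by
      have := Finset.card_le_card hZ
      obtain ⟨r, hr⟩ := he
      apply Finset.card_eq_zero.1
      omega
    subst hZ0
    refine ⟨∅, by simp, ?_, by simp [hV], by simp⟩
    intro Y hY hne
    exact absurd (Finset.subset_empty.1 hY) hne
  | succ k ih =>
    intro V Z hV hZ he hne
    have hZne : Z.Nonempty := by
      rw [Finset.nonempty_iff_ne_empty]
      intro h
      have := hne h
      omega
    obtain ⟨v, hv⟩ := hZne
    obtain ⟨w, hw, hwv⟩ := exists_second hv he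
    have hu : ∃ u ∈ V, u ≠ v ∧ (k = 0 ∨ u ≠ w) := by
      rcases Nat.eq_zero_or_pos k with h | h
      · exact ⟨w, hZ hw, hwv, Or.inl h⟩
      · have h1 : 0 < ((V.erase v).erase w).card := by
          rw [Finset.card_erase_of_mem (by simp [hwv, hZ hw]), Finset.card_erase_of_mem (hZ hv)]
          omega
        obtain ⟨u, hu⟩ := Finset.card_pos.1 h1
        simp only [mem_erase] at hu
        exact ⟨u, hu.2.2, hu.2.1, Or.inr hu.1⟩
    obtain ⟨u, huV, huv, hk⟩ := hu
    obtain ⟨T, hT⟩ := ih (V.erase v) (stepSet Z v u)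
      (by rw [Finset.card_erase_of_mem (hZ hv)]; omega)
      (stepSet_subset hZ huV huv) (stepSet_even hv huv he) (by
        intro h0
        rcases hk with hk | hk
        · exact hk
        · have := mem_stepSet hw hwv hk.symm
          simp [h0] at this)
    exact ⟨_, hT.extend (hZ hv) hv huV huv⟩

/-- For `n ≥ 2` and a nonempty `Z ⊆ [n]` of even cardinality, there are at least `n − 2`
distinct spanning trees of the complete graph on `[n]` (acyclic sets of `n − 1` edges)
whose set of odd-degree vertices is exactly `Z`. -/
theorem exists_many_trees_with_odd_degree_set (n : ℕ) (hn : 2 ≤ n) (Z : Finset ℕ)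
    (hZ : Z ⊆ rng n) (hZne : Z ≠ ∅) (hZeven : Even Z.card) :
    ∃ S : Finset (Finset (Finset ℕ)), n - 2 ≤ S.card ∧
      ∀ T ∈ S, T ⊆ simplices (rng n) 1 ∧ IsAcyclic T ∧ T.card = n - 1 ∧
        bd T = Z.image fun v => {v} := by
  have hcard : (rng n).card = n := by simp [rng]
  obtain ⟨v, hv⟩ := Finset.nonempty_iff_ne_empty.2 hZne
  obtain ⟨w, hw, hwv⟩ := exists_second hv hZeven
  have hex : ∀ u, ∃ T, u ∈ ((rng n).erase v).erase w →
      GoodTree ((rng n).erase v) (stepSet Z v u) T := by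
    intro u
    by_cases hu : u ∈ ((rng n).erase v).erase w
    · have hu' := hu
      simp only [mem_erase] at hu'
      obtain ⟨T, hT⟩ := exists_goodTree (n - 2) ((rng n).erase v) (stepSet Z v u)
        (by rw [Finset.card_erase_of_mem (hZ hv)]; omega)
        (stepSet_subset hZ hu'.2.2 hu'.2.1) (stepSet_even hv hu'.2.1 hZeven) (by
          intro h0
          have := mem_stepSet hw hwv (Ne.symm hu'.1)
          simp [h0] at this)
      exact ⟨T, fun _ => hT⟩
    · exact ⟨∅, fun h => absurd h hu⟩
  choose f hf using hex
  refine ⟨(((rng n).erase v).erase w).image fun u => insert {v, u} (f u), ?_, ?_⟩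
  · rw [Finset.card_image_of_injOn]
    · rw [Finset.card_erase_of_mem (by simp [hwv, hZ hw]), Finset.card_erase_of_mem (hZ hv)]
      omega
    · intro a ha b hb hab
      have hmem : ({v, a} : Finset ℕ) ∈ insert {v, b} (f b) := by
        have hab' : insert {v, a} (f a) = insert {v, b} (f b) := hab
        rw [← hab']
        simp
      have hav : a ≠ v := by
        have := ha
        simp only [coe_erase, Set.mem_diff, Set.mem_singleton_iff] at this
        exact this.1.2
      rcases Finset.mem_insert.1 hmem with h | h
      · have : a ∈ ({v, b} : Finset ℕ) := by rw [← h]; simp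
        simpa [hav] using this
      · exact absurd (by simp) ((hf b hb).not_mem (v := v) (by simp) _ h)
  · intro T hT
    obtain ⟨u, hu, rfl⟩ := Finset.mem_image.1 hT
    have hu' := hu
    simp only [mem_erase] at hu'
    obtain ⟨h1, h2, h3, h4⟩ := (hf u hu).extend (hZ hv) hv hu'.2.2 hu'.2.1
    refine ⟨h1, h2, by omega, ?_⟩
    ext τ
    rw [mem_bd_edges h1]
    simp only [h4, mem_image]
    constructor
    · rintro ⟨x, rfl, hx⟩
      exact ⟨x, hx, rfl⟩
    · rintro ⟨x, hx, rfl⟩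
      exact ⟨x, rfl, hx⟩
end
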